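/- Let Γ̄ be a countable subgroup of Isom X × Isom X* with finite exponential growth relative to (X × X*, d̄), and π a probability measure on Γ̄ with finite first moment and non-elementary marginals μ and μ*. Write l = l(X,μ) and h̄ = h(π) − h(∂X*,μ*). For every ε > 0 there exist N ∈ ℤ_+, a Borel set D ⊆ ∂X* with ν_{μ*}(D) ≥ 1−ε, a Borel set F ⊆ ∂X × ∂X* with ν_π^η(F) ≥ 1−ε for ν_{μ*}-almost every η ∈ D and ν_π(F) ≥ 1−ε, and a constant C_ε depending only on ε, such that for ν_{μ*}-almost every η ∈ D, all ξ ∈ ∂X and all n ≥ N: ν_π^η( (B(ξ, e^{−ln}) × ∂X*) ∩ F ) ≤ C_ε e^{−n(h̄ − ε)}. -/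

import Mathlib

open MeasureTheory Filter Topology Metric Set
open scoped ENNReal Classical

noncomputable section

namespace HMDim

/-! ### Gromov products and hyperbolicity -/

/-- The Gromov product `(x|y)_o = (d(x,o)+d(o,y)-d(x,y))/2`. -/
def gp {X : Type*} [MetricSpace X] (o x y : X) : ℝ :=
  (dist x o + dist o y - dist x y) / 2

/-- `X` is `δ`-hyperbolic. -/
def IsHyperbolicWith (X : Type*) [MetricSpace X] (δ : ℝ) : Prop :=
  ∀ x y z w : X, min (gp w x z) (gp w z y) - δ ≤ gp w x y

/-- `X` is hyperbolic: `δ`-hyperbolic for some `δ ≥ 0`. -/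
def IsHyperbolic (X : Type*) [MetricSpace X] : Prop :=
  ∃ δ : ℝ, 0 ≤ δ ∧ IsHyperbolicWith X δ

/-- `X` is `C`-roughly geodesic for some `C ≥ 0`: any two points are joined by a
`C`-rough geodesic. -/
def IsRoughGeodesicSpace (X : Type*) [MetricSpace X] : Prop :=
  ∃ C : ℝ, 0 ≤ C ∧ ∀ x y : X, ∃ (b : ℝ) (γ : ℝ → X), 0 ≤ b ∧ γ 0 = x ∧ γ b = y ∧
    ∀ s ∈ Set.Icc (0:ℝ) b, ∀ t ∈ Set.Icc (0:ℝ) b, abs (dist (γ s) (γ t) - |s - t|) ≤ C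

/-- Bounded growth at some scale: there are `0 < r < R` and `N` such that every ball of
radius `R` is covered by at most `N` balls of radius `r`. -/
def HasBoundedGrowthAtSomeScale (X : Type*) [MetricSpace X] : Prop :=
  ∃ (r R : ℝ) (N : ℕ), 0 < r ∧ r < R ∧
    ∀ x : X, ∃ s : Finset X, s.card ≤ N ∧ Metric.ball x R ⊆ ⋃ y ∈ s, Metric.ball y r

/-! ### The Gromov boundary -/

/-- A sequence is divergent if it is Cauchy for the Gromov-product quasi-metric, i.e.
`(u n | u m)_o → ∞`. -/
def IsDivergent {X : Type*} [MetricSpace X] (o : X) (u : ℕ → X) : Prop :=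
  Tendsto (fun pr : ℕ × ℕ => gp o (u pr.1) (u pr.2)) atTop atTop

/-- The type of divergent sequences. -/
def DivSeq (X : Type*) [MetricSpace X] (o : X) : Type _ := {u : ℕ → X // IsDivergent o u}

/-- Two divergent sequences are equivalent when `(u n | v m)_o → ∞`. -/
def bndRel {X : Type*} [MetricSpace X] (o : X) (u v : DivSeq X o) : Prop :=
  Tendsto (fun pr : ℕ × ℕ => gp o (u.1 pr.1) (v.1 pr.2)) atTop atTop

/-- The Gromov boundary: equivalence classes of divergent sequences. -/
def Boundary (X : Type*) [MetricSpace X] (o : X) : Type _ := Quot (bndRel o)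

/-- The boundary point of a divergent sequence. -/
def mkB {X : Type*} [MetricSpace X] (o : X) (u : DivSeq X o) : Boundary X o :=
  Quot.mk _ u

/-- The extended Gromov product of two boundary points: the infimum over pairs of
representatives of the liminf of Gromov products. -/
def gpB {X : Type*} [MetricSpace X] (o : X) (ξ η : Boundary X o) : ℝ :=
  sInf {t : ℝ | ∃ u v : DivSeq X o, mkB o u = ξ ∧ mkB o v = η ∧
    t = Filter.liminf (fun pr : ℕ × ℕ => gp o (u.1 pr.1) (v.1 pr.2)) atTop}

/-- The quasi-metric `q(ξ,η) = exp(-(ξ|η)_o)` on the boundary (`0` on the diagonal). -/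
def qB {X : Type*} [MetricSpace X] (o : X) (ξ η : Boundary X o) : ℝ :=
  if ξ = η then 0 else Real.exp (-(gpB o ξ η))

/-- The extended Gromov product of an interior point with a boundary point. -/
def gpXB {X : Type*} [MetricSpace X] (o : X) (x : X) (ξ : Boundary X o) : ℝ :=
  sInf {t : ℝ | ∃ u : DivSeq X o, mkB o u = ξ ∧
    t = Filter.liminf (fun m : ℕ => gp o x (u.1 m)) atTop}

/-- Quasi-metric between an interior point and a boundary point. -/
def qXB {X : Type*} [MetricSpace X] (o : X) (x : X) (ξ : Boundary X o) : ℝ :=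
  Real.exp (-(gpXB o x ξ))

/-- The open ball of a quasi-metric. -/
def qball {A : Type*} (q : A → A → ℝ) (ξ : A) (r : ℝ) : Set A := {η | q ξ η < r}

/-- The max quasi-metric `q̄` on the product of two boundaries. -/
def qbb {X Xs : Type*} [MetricSpace X] [MetricSpace Xs] (o : X) (os : Xs)
    (ξ η : Boundary X o × Boundary Xs os) : ℝ :=
  max (qB o ξ.1 η.1) (qB os ξ.2 η.2)

/-- Boundaries are measurable spaces, with the σ-algebra generated by quasi-metric balls. -/
instance (X : Type*) [MetricSpace X] (o : X) : MeasurableSpace (Boundary X o) :=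
  MeasurableSpace.generateFrom {s | ∃ ξ r, s = qball (qB o) ξ r}

/-! ### The boundary action of isometries -/

lemma gp_isometry_le {X : Type*} [MetricSpace X] (o : X) (g : X ≃ᵢ X) (x y : X) :
    gp o x y - dist o (g o) ≤ gp o (g x) (g y) := by
  have e1 : dist (g x) (g o) = dist x o := g.dist_eq x o
  have e2 : dist (g o) (g y) = dist o y := g.dist_eq o y
  have e3 : dist (g x) (g y) = dist x y := g.dist_eq x y
  have e4 : dist (g o) o = dist o (g o) := dist_comm _ _
  have t1 : dist (g x) (g o) ≤ dist (g x) o + dist o (g o) := dist_triangle _ _ _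
  have t2 : dist (g o) (g y) ≤ dist (g o) o + dist o (g y) := dist_triangle _ _ _
  simp only [gp]
  linarith [t1, t2, e1, e2, e3, e4]

lemma isDivergent_comp {X : Type*} [MetricSpace X] (o : X) (g : X ≃ᵢ X) {u : ℕ → X}
    (h : IsDivergent o u) : IsDivergent o fun n => g (u n) := by
  have h' := tendsto_atTop_add_const_right atTop (-(dist o (g o)))
    (h : Tendsto (fun pr : ℕ × ℕ => gp o (u pr.1) (u pr.2)) atTop atTop)
  refine tendsto_atTop_mono (fun pr => ?_) h'
  have := gp_isometry_le o g (u pr.1) (u pr.2)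
  simpa [sub_eq_add_neg] using this

lemma bndRel_comp {X : Type*} [MetricSpace X] (o : X) (g : X ≃ᵢ X) {u v : DivSeq X o}
    (h : bndRel o u v) :
    bndRel o ⟨fun n => g (u.1 n), isDivergent_comp o g u.2⟩
      ⟨fun n => g (v.1 n), isDivergent_comp o g v.2⟩ := by
  have h' := tendsto_atTop_add_const_right atTop (-(dist o (g o)))
    (h : Tendsto (fun pr : ℕ × ℕ => gp o (u.1 pr.1) (v.1 pr.2)) atTop atTop)
  refine tendsto_atTop_mono (fun pr => ?_) h'
  have := gp_isometry_le o g (u.1 pr.1) (v.1 pr.2)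
  simpa [sub_eq_add_neg] using this

/-- The induced action of an isometry on the Gromov boundary. -/
def bAct {X : Type*} [MetricSpace X] (o : X) (g : X ≃ᵢ X) :
    Boundary X o → Boundary X o :=
  Quot.map (fun u : DivSeq X o =>
      (⟨fun n => g (u.1 n), isDivergent_comp o g u.2⟩ : DivSeq X o))
    (fun _ _ h => bndRel_comp o g h)

/-! ### Random walks on countable groups -/

/-- Convolution of two measures (as `ℝ≥0∞`-valued functions) on a group. -/
def conv {G : Type*} [Group G] (p q : G → ℝ≥0∞) : G → ℝ≥0∞ :=
  fun x => ∑' y : G, p y * q (y⁻¹ * x)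

/-- The `n`-fold convolution power `π_n` of `p`. -/
def piN {G : Type*} [Group G] (p : G → ℝ≥0∞) : ℕ → G → ℝ≥0∞
  | 0 => fun x => if x = 1 then 1 else 0
  | n + 1 => conv (piN p n) p

/-- The Shannon entropy `H(π_n)` of the `n`-th convolution power. -/
def entropySeq {G : Type*} [Group G] (p : G → ℝ≥0∞) (n : ℕ) : ℝ :=
  ∑' x : G, Real.negMulLog ((piN p n x).toReal)

/-- The first moment of `π_n` with respect to a displacement function `f`. -/
def momentSeq {G : Type*} [Group G] (p : G → ℝ≥0∞) (f : G → ℝ) (n : ℕ) : ℝ :=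
  ∑' x : G, (piN p n x).toReal * f x

/-- `h` is the asymptotic entropy of the `p`-random walk:
`h = lim (1/n) H(π_n)`. -/
def HasEntropy {G : Type*} [Group G] (p : G → ℝ≥0∞) (h : ℝ) : Prop :=
  Tendsto (fun n : ℕ => entropySeq p n / n) atTop (nhds h)

/-- `l` is the drift (rate of escape) of the `p`-random walk with respect to the
displacement `f`: `l = lim (1/n) Σ_x f(x) π_n(x)`. -/
def HasDrift {G : Type*} [Group G] (p : G → ℝ≥0∞) (f : G → ℝ) (l : ℝ) : Prop :=
  Tendsto (fun n : ℕ => momentSeq p f n / n) atTop (nhds l)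

/-- `p` is a probability distribution. -/
def IsProb {G : Type*} (p : G → ℝ≥0∞) : Prop := ∑' x : G, p x = 1

/-- Finite first moment with respect to a displacement function `f`. -/
def FiniteFirstMoment {G : Type*} (p : G → ℝ≥0∞) (f : G → ℝ) : Prop :=
  ∑' x : G, p x * ENNReal.ofReal (f x) ≠ ∞

/-- The pushforward of a distribution `p` by a map `f` (e.g. a marginal). -/
def marginalStar {G A : Type*} (p : G → ℝ≥0∞) (f : G → A) : A → ℝ≥0∞ :=
  fun a => ∑' x : G, if f x = a then p x else 0

/-- A subgroup is non-elementary (in the relevant sense) if it contains a free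
subgroup of rank 2. -/
def IsNonElementarySubgroup {G : Type*} [Group G] (H : Subgroup G) : Prop :=
  ∃ φ : FreeGroup (Fin 2) →* G, Function.Injective φ ∧ φ.range ≤ H

/-- A measure `p` on a group is non-elementary if the subgroup generated by its
support contains a free subgroup of rank 2. -/
def IsNonElemMeasure {G : Type*} [Group G] (p : G → ℝ≥0∞) : Prop :=
  IsNonElementarySubgroup (Subgroup.closure {x : G | p x ≠ 0})

/-- A group containing a free subgroup of rank 2 (a non-elementary group). -/
def HasFreeSubgroup (G : Type*) [Group G] : Prop :=
  ∃ φ : FreeGroup (Fin 2) →* G, Function.Injective φ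

/-! ### Path space -/

/-- The position `w_n = x_1 ⋯ x_n` of the random walk with increments `ω`. -/
def walk {G : Type*} [Group G] (ω : ℕ → G) (n : ℕ) : G := ((List.range n).map ω).prod

/-- The cylinder set `[w̄_0, …, w̄_n]` of trajectories whose positions agree with those
of `ω` up to time `n`. -/
def cyl {G : Type*} [Group G] (ω : ℕ → G) (n : ℕ) : Set (ℕ → G) :=
  {ω' | ∀ i ≤ n, walk ω' i = walk ω i}

/-- `P` is the distribution of the increments of the `p`-random walk: the product
measure `p^{⊗ℕ}` on the path space. -/
def IsRWMeasure {G : Type*} [Group G] [MeasurableSpace G] (p : G → ℝ≥0∞)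
    (P : Measure (ℕ → G)) : Prop :=
  IsProbabilityMeasure P ∧
    ∀ (n : ℕ) (g : ℕ → G), P {ω | ∀ i < n, ω i = g i} = ∏ i ∈ Finset.range n, p (g i)

/-- `ν` is the harmonic measure on the boundary of `X` for the random walk with path
measure `P` and orbit map `z`: the image of `P` under the a.s.-defined boundary map. -/
def IsHarmonic {Ω X : Type*} [MeasurableSpace Ω] [MetricSpace X] (o : X)
    (P : Measure Ω) (z : Ω → ℕ → X) (ν : Measure (Boundary X o)) : Prop :=
  ∃ bnd : Ω → Boundary X o, Measurable bnd ∧ ν = P.map bnd ∧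
    ∀ᵐ ω ∂P, ∃ h : IsDivergent o (z ω), bnd ω = mkB o ⟨z ω, h⟩

/-- `ν` is the harmonic measure on the product of the boundaries of `X` and `Xs` for
the random walk with path measure `P` and orbit maps `z`, `zs`. -/
def IsJointHarmonic {Ω X Xs : Type*} [MeasurableSpace Ω] [MetricSpace X] [MetricSpace Xs]
    (o : X) (os : Xs) (P : Measure Ω) (z : Ω → ℕ → X) (zs : Ω → ℕ → Xs)
    (ν : Measure (Boundary X o × Boundary Xs os)) : Prop :=
  ∃ bnd : Ω → Boundary X o × Boundary Xs os, Measurable bnd ∧ ν = P.map bnd ∧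
    ∀ᵐ ω ∂P, ∃ (h1 : IsDivergent o (z ω)) (h2 : IsDivergent os (zs ω)),
      bnd ω = (mkB o ⟨z ω, h1⟩, mkB os ⟨zs ω, h2⟩)

/-- `cond` is a disintegration (system of conditional measures) of `P` with respect to
the map `f`, over the pushforward `νB = f_* P`. -/
def IsDisintegration {A B : Type*} [MeasurableSpace A] [MeasurableSpace B]
    (P : Measure A) (f : A → B) (νB : Measure B) (cond : B → Measure A) : Prop :=
  νB = P.map f ∧ (∀ᵐ b ∂νB, IsProbabilityMeasure (cond b)) ∧
    (∀ᵐ b ∂νB, cond b (f ⁻¹' {b}) = 1) ∧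
    ∀ s : Set A, MeasurableSet s → P s = ∫⁻ b, cond b s ∂νB

/-! ### Hausdorff dimension for quasi-metrics -/

/-- Diameter of a set for a quasi-metric. -/
def qdiam {A : Type*} (q : A → A → ℝ) (E : Set A) : ℝ≥0∞ :=
  ⨆ x ∈ E, ⨆ y ∈ E, ENNReal.ofReal (q x y)

/-- Hausdorff pre-measure (content) at scale `Δ`. -/
def qHContent {A : Type*} (q : A → A → ℝ) (α Δ : ℝ) (E : Set A) : ℝ≥0∞ :=
  ⨅ (c : ℕ → Set A) (_ : E ⊆ ⋃ i, c i) (_ : ∀ i, qdiam q (c i) ≤ ENNReal.ofReal Δ),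
    ∑' i, qdiam q (c i) ^ α

/-- The `α`-dimensional Hausdorff measure of a set for a quasi-metric. -/
def qHMeasure {A : Type*} (q : A → A → ℝ) (α : ℝ) (E : Set A) : ℝ≥0∞ :=
  ⨆ (Δ : ℝ) (_ : 0 < Δ), qHContent q α Δ E

/-- The Hausdorff dimension of a set for a quasi-metric. -/
def qdimSet {A : Type*} (q : A → A → ℝ) (E : Set A) : ℝ :=
  sSup {α : ℝ | 0 ≤ α ∧ 0 < qHMeasure q α E}

/-- The upper Hausdorff dimension of a measure. -/
def qdimUpper {A : Type*} [MeasurableSpace A] (q : A → A → ℝ) (ν : Measure A) : ℝ :=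
  sInf {d : ℝ | ∃ E : Set A, MeasurableSet E ∧ ν Eᶜ = 0 ∧ d = qdimSet q E}

/-- The lower Hausdorff dimension of a measure. -/
def qdimLower {A : Type*} [MeasurableSpace A] (q : A → A → ℝ) (ν : Measure A) : ℝ :=
  sInf {d : ℝ | ∃ E : Set A, MeasurableSet E ∧ 0 < ν E ∧ d = qdimSet q E}

/-- The Hausdorff dimension of `ν` exists and equals `D`. -/
def HasDim {A : Type*} [MeasurableSpace A] (q : A → A → ℝ) (ν : Measure A) (D : ℝ) : Prop :=
  qdimUpper q ν = D ∧ qdimLower q ν = D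

/-- `ν` is exact dimensional with dimension `D` for the quasi-metric `q`:
`lim_{r→0} log ν(B(ξ,r))/log r = D` for `ν`-a.e. `ξ`. -/
def ExactDim {A : Type*} [MeasurableSpace A] (q : A → A → ℝ) (ν : Measure A) (D : ℝ) : Prop :=
  ∀ᵐ ξ ∂ν, Tendsto (fun r : ℝ => Real.log (ν (qball q ξ r)).toReal / Real.log r)
    (nhdsWithin 0 (Set.Ioi 0)) (nhds D)

/-! ### Differential entropy -/

/-- The differential entropy
`h(∂X*, μ*) = Σ_g μ*(g) ∫ log (d gν/dν) d(gν)` of a measure on the isometry group with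
respect to a boundary measure. -/
def diffEntropy {Xs : Type*} [MetricSpace Xs] (os : Xs) (pstar : (Xs ≃ᵢ Xs) → ℝ≥0∞)
    (νs : Measure (Boundary Xs os)) : ℝ :=
  ∑' g : (Xs ≃ᵢ Xs), (pstar g).toReal *
    ∫ η, Real.log ((Measure.rnDeriv (νs.map (bAct os g)) νs η).toReal)
      ∂(νs.map (bAct os g))

/-! ### Word metrics and hyperbolic groups -/

/-- The word length of `g` with respect to a (symmetrized) generating set `S`. -/
def wordLength {G : Type*} [Group G] (S : Set G) (g : G) : ℕ :=
  sInf {n : ℕ | ∃ f : Fin n → G, (∀ i, f i ∈ S ∨ (f i)⁻¹ ∈ S) ∧ g = (List.ofFn f).prod}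

/-- The metric of `G` is quasi-isometric to a word metric of a finite generating set. -/
def IsQIToWordMetric (G : Type*) [Group G] [MetricSpace G] : Prop :=
  ∃ S : Finset G, Subgroup.closure (S : Set G) = ⊤ ∧
    ∃ Λ c : ℝ, 1 ≤ Λ ∧ 0 ≤ c ∧ ∀ g : G,
      (wordLength (S : Set G) g : ℝ) / Λ - c ≤ dist (1 : G) g ∧
      dist (1 : G) g ≤ Λ * (wordLength (S : Set G) g) + c

/-- The metric of `G` is left invariant. -/
def LeftInvariantMetric (G : Type*) [Group G] [MetricSpace G] : Prop :=
  ∀ g x y : G, dist (g * x) (g * y) = dist x y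

/-- `G`, with its metric, is a hyperbolic group: the metric is left invariant,
hyperbolic and quasi-isometric to a word metric. -/
def IsHypGroupMetric (G : Type*) [Group G] [MetricSpace G] : Prop :=
  LeftInvariantMetric G ∧ IsHyperbolic G ∧ IsQIToWordMetric G

/-! ### Groups of isometries of a product -/

/-- First component of an element of a subgroup of `Isom X × Isom X*`. -/
def proj1 {X Xs : Type*} [MetricSpace X] [MetricSpace Xs]
    {Γb : Subgroup ((X ≃ᵢ X) × (Xs ≃ᵢ Xs))} (γ : Γb) : X ≃ᵢ X :=
  (γ : (X ≃ᵢ X) × (Xs ≃ᵢ Xs)).1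

/-- Second component of an element of a subgroup of `Isom X × Isom X*`. -/
def proj2 {X Xs : Type*} [MetricSpace X] [MetricSpace Xs]
    {Γb : Subgroup ((X ≃ᵢ X) × (Xs ≃ᵢ Xs))} (γ : Γb) : Xs ≃ᵢ Xs :=
  (γ : (X ≃ᵢ X) × (Xs ≃ᵢ Xs)).2

/-- Displacement `d̄(ō, γ·ō)` of the base point `ō = (o,o*)` (the metric of the product
is the max metric). -/
def disp {X Xs : Type*} [MetricSpace X] [MetricSpace Xs]
    {Γb : Subgroup ((X ≃ᵢ X) × (Xs ≃ᵢ Xs))} (o : X) (os : Xs) (γ : Γb) : ℝ :=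
  dist (o, os) (proj1 γ o, proj2 γ os)

/-- Finite exponential growth relative to a displacement function `f`:
`#{x : f(x) < r} ≤ c e^{c r}`. -/
def FinExpGrowth {G : Type*} (f : G → ℝ) : Prop :=
  ∃ c : ℝ, 0 < c ∧ ∀ r : ℝ, 0 < r →
    {x : G | f x < r}.Finite ∧ ({x : G | f x < r}.ncard : ℝ) ≤ c * Real.exp (c * r)

/-! ### The events of Lemmas `A` and `E_n(η)` -/

/-- The event `A_{ε,n} = ∩_{t ≥ n} {z̄_∞ exists and q̄(z̄_t, z̄_∞) ≤ e^{-(l*-ε)n}}`. -/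
def Aev {X Xs : Type*} [MetricSpace X] [MetricSpace Xs]
    (Γb : Subgroup ((X ≃ᵢ X) × (Xs ≃ᵢ Xs))) (o : X) (os : Xs) (ε lst : ℝ) (n : ℕ) :
    Set (ℕ → Γb) :=
  {ω | ∃ (h1 : IsDivergent o (fun t => proj1 (walk ω t) o))
        (h2 : IsDivergent os (fun t => proj2 (walk ω t) os)),
      ∀ t, n ≤ t →
        max (qXB o (proj1 (walk ω t) o) (mkB o ⟨_, h1⟩))
            (qXB os (proj2 (walk ω t) os) (mkB os ⟨_, h2⟩))
          ≤ Real.exp (-((lst - ε) * n))}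

/-- The event
`E_{ε,n}(η) = {P^η([w̄_0,…,w̄_n] ∩ A_{ε,n}) ≤ e^{n(h*+ε)} P([w̄_0,…,w̄_n] ∩ A_{ε,n})}`. -/
def Eev {X Xs : Type*} [MetricSpace X] [MetricSpace Xs]
    (Γb : Subgroup ((X ≃ᵢ X) × (Xs ≃ᵢ Xs))) [MeasurableSpace Γb] (o : X) (os : Xs)
    (P : Measure (ℕ → Γb)) (condP : Boundary Xs os → Measure (ℕ → Γb))
    (hst ε lst : ℝ) (η : Boundary Xs os) (n : ℕ) : Set (ℕ → Γb) :=
  {ω | condP η (cyl ω n ∩ Aev Γb o os ε lst n) ≤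
        ENNReal.ofReal (Real.exp (n * (hst + ε))) * P (cyl ω n ∩ Aev Γb o os ε lst n)}

/-! ### Special measures -/

/-- The measure `π^ρ = ρ μ×μ + (1-ρ) μ_diag` on `Γ × Γ`. -/
def pRho {Γ : Type*} (p : Γ → ℝ≥0∞) (ρ : ℝ) : Γ × Γ → ℝ≥0∞ :=
  fun g => ENNReal.ofReal ρ * (p g.1 * p g.2) +
    ENNReal.ofReal (1 - ρ) * (if g.1 = g.2 then p g.1 else 0)

/-- The uniform distribution on the symmetrized free basis of `F_{m+1}`. -/
def symFreeBasisUniform (m : ℕ) : FreeGroup (Fin (m + 1)) → ℝ≥0∞ :=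
  fun g => if ∃ i : Fin (m + 1), g = FreeGroup.of i ∨ g = (FreeGroup.of i)⁻¹
    then ENNReal.ofReal (1 / (2 * (m + 1))) else 0

/-- The homomorphism `F_{m+1} → F_m` sending `x_i ↦ y_i` for `i ≤ m` and `x_{m+1} ↦ 1`. -/
def projHom (m : ℕ) : FreeGroup (Fin (m + 1)) →* FreeGroup (Fin m) :=
  FreeGroup.lift (fun i => if h : (i : ℕ) < m then FreeGroup.of (⟨i, h⟩ : Fin m) else 1)

set_option linter.unusedSectionVars false
set_option linter.unusedVariables false
set_option linter.unusedSimpArgs false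

/-! ### A Kingman-type lower bound -/

/-- Recursive error term in the covering argument. -/
def kErr {Ω : Type*} (T : Ω → Ω) (e : ℕ → Ω → ℝ) : ℕ → Ω → ℝ
  | 0 => fun _ => 0
  | M + 1 => fun ω => e (M + 1) ω + kErr T e M (T ω)

lemma kErr_nonneg {Ω : Type*} (T : Ω → Ω) (e : ℕ → Ω → ℝ) (he : ∀ n ω, 0 ≤ e n ω) :
    ∀ M ω, 0 ≤ kErr T e M ω := by
  intro M
  induction M with
  | zero => intro ω; simp [kErr]
  | succ M ih => intro ω; exact add_nonneg (he _ _) (ih _)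

lemma kErr_mono {Ω : Type*} (T : Ω → Ω) (e : ℕ → Ω → ℝ) (he : ∀ n ω, 0 ≤ e n ω) (m : ℕ) :
    ∀ n ω, kErr T e m (T^[n] ω) ≤ kErr T e (m + n) ω := by
  intro n
  induction n with
  | zero => intro ω; simp
  | succ n ih =>
    intro ω
    rw [Function.iterate_succ_apply]
    refine (ih (T ω)).trans ?_
    show _ ≤ e _ ω + kErr T e (m + n) (T ω)
    have := he (m.add n + 1) ω
    linarith [this]

lemma kErr_cover {Ω : Type*} (T : Ω → Ω) (g : ℕ → Ω → ℝ) (a : ℝ) (K : ℕ)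
    (e : ℕ → Ω → ℝ) (he : ∀ n ω, 0 ≤ e n ω)
    (hg0 : ∀ ω, g 0 ω = 0)
    (he1 : ∀ n ω, n ≤ K → g 1 ω - a ≤ e n ω)
    (he2 : ∀ n ω, (∀ k, 1 ≤ k → k ≤ K → a * k ≤ g k ω) → g 1 ω - a ≤ e n ω) :
    ∀ M ω, (∀ k n m, g (n + m) (T^[k] ω) ≤ g n (T^[k] ω) + g m (T^[n] (T^[k] ω))) →
      g M ω ≤ a * M + kErr T e M ω := by
  intro M
  induction M using Nat.strong_induction_on with
  | _ M ih =>
    intro ω hs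
    have hsh : ∀ j, ∀ k n m, g (n + m) (T^[k] (T^[j] ω)) ≤ g n (T^[k] (T^[j] ω))
        + g m (T^[n] (T^[k] (T^[j] ω))) := by
      intro j k n m
      have := hs (k + j) n m
      rwa [Function.iterate_add_apply] at this
    rcases Nat.eq_zero_or_pos M with rfl | hM
    · simp [hg0, kErr]
    obtain ⟨M, rfl⟩ : ∃ M', M = M' + 1 := ⟨M - 1, by omega⟩
    have one : g 1 ω - a ≤ e (M + 1) ω → g (M + 1) ω ≤ a * ((M + 1 : ℕ) : ℝ) + kErr T e (M + 1) ω := by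
      intro h1
      have h2 := hs 0 1 M
      simp only [Function.iterate_zero, id, Function.iterate_one] at h2
      have h3 := ih M (by omega) (T ω) (hsh 1)
      rw [add_comm 1 M] at h2
      show _ ≤ _ + (e (M + 1) ω + kErr T e M (T ω))
      push_cast
      linarith
    by_cases hK : M + 1 ≤ K
    · exact one (he1 _ _ hK)
    by_cases hB : ∀ k, 1 ≤ k → k ≤ K → a * k ≤ g k ω
    · exact one (he2 _ _ hB)
    push Not at hB
    obtain ⟨k, hk1, hkK, hlt⟩ := hB
    have h2 := hs 0 k (M + 1 - k)
    simp only [Function.iterate_zero, id] at h2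
    have h3 := ih (M + 1 - k) (by omega) (T^[k] ω) (hsh k)
    have h4 := kErr_mono T e he (M + 1 - k) k ω
    rw [show k + (M + 1 - k) = M + 1 by omega] at h2
    rw [show (M + 1 - k) + k = M + 1 by omega] at h4
    rw [Nat.cast_sub (by omega)] at h3
    nlinarith

lemma kErr_integral {Ω : Type*} [MeasurableSpace Ω] {P : Measure Ω} {T : Ω → Ω}
    (hT : MeasurePreserving T P P) (e : ℕ → Ω → ℝ) (he : ∀ n, Integrable (e n) P)
    (β γ : ℝ) (K : ℕ) (hγ : 0 ≤ γ) (h1 : ∀ n, ∫ ω, e n ω ∂P ≤ β + γ)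
    (h2 : ∀ n, K < n → ∫ ω, e n ω ∂P ≤ β) :
    ∀ M, Integrable (kErr T e M) P ∧ ∫ ω, kErr T e M ω ∂P ≤ M * β + (min M K : ℕ) * γ := by
  intro M
  induction M with
  | zero =>
    constructor
    · exact integrable_zero _ _ _
    · simp [kErr]
  | succ M ih =>
    have hi : Integrable (fun ω => kErr T e M (T ω)) P :=
      hT.integrable_comp_of_integrable ih.1
    refine ⟨(he (M+1)).add hi, ?_⟩
    have : ∫ ω, kErr T e (M+1) ω ∂P = ∫ ω, e (M+1) ω ∂P + ∫ ω, kErr T e M ω ∂P := by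
      have e1 : ∫ ω, kErr T e M (T ω) ∂P = ∫ ω, kErr T e M ω ∂P := by
        conv_rhs => rw [← hT.map_eq]
        rw [integral_map hT.measurable.aemeasurable]
        rw [hT.map_eq]; exact ih.1.aestronglyMeasurable
      rw [← e1]
      exact integral_add (he (M+1)) hi
    rw [this]
    by_cases hK : M + 1 ≤ K
    · have e1 : min (M+1) K = M + 1 := by omega
      have e2 : min M K = M := by omega
      have := h1 (M+1)
      rw [e1]; rw [e2] at ih
      push_cast
      linarith [ih.2]
    · have e1 : min (M+1) K = K := by omega
      have e2 : min M K = K := by omega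
      have := h2 (M+1) (by omega)
      rw [e1]; rw [e2] at ih
      push_cast
      linarith [ih.2]

lemma kingman_lower {Ω : Type*} [MeasurableSpace Ω] {P : Measure Ω} [IsProbabilityMeasure P]
    {T : Ω → Ω} (hT : Ergodic T P) (g : ℕ → Ω → ℝ) (hg : ∀ n, Measurable (g n))
    (hintg : ∀ n, Integrable (g n) P) (hg0 : ∀ ω, g 0 ω = 0)
    (hsub : ∀ᵐ ω ∂P, ∀ n m, g (n + m) ω ≤ g n ω + g m (T^[n] ω)) (h : ℝ)
    (hh : Tendsto (fun n : ℕ => (∫ ω, g n ω ∂P) / n) atTop (𝓝 h)) (a : ℝ) (ha : a < h) :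
    ∀ᵐ ω ∂P, ∀ᶠ n : ℕ in atTop, a * n ≤ g n ω := by
  obtain ⟨a', haa', ha'⟩ := exists_between ha
  set A : Set Ω := {ω | ∃ b : ℚ, (b : ℝ) < a' ∧ ∃ᶠ n : ℕ in atTop, g n ω < b * n} with hA
  have hmA : MeasurableSet A := by
    have : A = ⋃ b : ℚ, ⋃ (_ : (b : ℝ) < a'), ⋂ N : ℕ, ⋃ n : ℕ, ⋃ (_ : N ≤ n),
        {ω | g n ω < b * n} := by
      ext ω
      simp only [hA, mem_ofPred_eq, mem_iUnion, mem_iInter, frequently_atTop, exists_prop]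
    rw [this]
    refine MeasurableSet.iUnion fun b => MeasurableSet.iUnion fun _ => MeasurableSet.iInter fun N =>
      MeasurableSet.iUnion fun n => MeasurableSet.iUnion fun _ => ?_
    exact measurableSet_lt (hg n) measurable_const
  have hinv : T ⁻¹' A ≤ᵐ[P] A := by
    filter_upwards [hsub] with ω hω
    rintro ⟨b, hb, hfr⟩
    obtain ⟨b', hb1, hb2⟩ := exists_rat_btwn hb
    refine ⟨b', hb2, ?_⟩
    have hb1' : (0:ℝ) < b' - b := by linarith
    have hev : ∀ᶠ n : ℕ in atTop, (g 1 ω - b') / (b' - b) ≤ n := by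
      exact tendsto_natCast_atTop_atTop.eventually_ge_atTop _
    have hfr2 := hfr.and_eventually hev
    rw [frequently_atTop] at hfr2 ⊢
    intro N
    obtain ⟨n, hn, h1, h2⟩ := hfr2 N
    refine ⟨n + 1, by omega, ?_⟩
    have h3 := hω 1 n
    rw [add_comm 1 n, Function.iterate_one] at h3
    rw [div_le_iff₀ hb1'] at h2
    push_cast
    nlinarith
  rcases hT.ae_empty_or_univ_of_preimage_ae_le hmA.nullMeasurableSet hinv with hE | hU
  · obtain ⟨b, hb1, hb2⟩ := exists_rat_btwn haa'
    filter_upwards [hE] with ω hω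
    have hω' : ω ∉ A := by
      intro h'
      have : (ω ∈ (∅ : Set Ω)) := (eq_iff_iff.mp hω).mp h'
      exact this
    by_contra hcon
    apply hω'
    refine ⟨b, hb2, ?_⟩
    rw [not_eventually] at hcon
    refine hcon.mono fun n hn => ?_
    push Not at hn
    have : a * (n:ℝ) ≤ b * n := by
      apply mul_le_mul_of_nonneg_right hb1.le (Nat.cast_nonneg n)
    linarith
  · exfalso
    set B : ℕ → Set Ω := fun K => {ω | ∀ k : ℕ, 1 ≤ k → k ≤ K → a' * k ≤ g k ω} with hB
    have hmB : ∀ K, MeasurableSet (B K) := by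
      intro K
      have : B K = ⋂ k : ℕ, ⋂ (_ : 1 ≤ k), ⋂ (_ : k ≤ K), {ω | a' * k ≤ g k ω} := by
        ext ω; simp [hB]
      rw [this]
      exact MeasurableSet.iInter fun k => MeasurableSet.iInter fun _ => MeasurableSet.iInter fun _ =>
        measurableSet_le measurable_const (hg k)
    have hBanti : Antitone B := by
      intro K L hKL ω hω k h1 h2
      exact hω k h1 (h2.trans hKL)
    set c : Ω → ℝ := fun ω => |g 1 ω| + |a'| with hc
    have hc0 : ∀ ω, 0 ≤ c ω := fun ω => by positivity
    have hci : Integrable c P := (hintg 1).abs.add (integrable_const _)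
    have hBnull : P (⋂ K, B K) = 0 := by
      have : ∀ᵐ ω ∂P, ω ∉ ⋂ K, B K := by
        have hU' : ∀ᵐ ω ∂P, ω ∈ A := by
          exact eventuallyEq_univ.mp hU
        filter_upwards [hU'] with ω hω hmem
        obtain ⟨b, hb, hfr⟩ := hω
        rw [frequently_atTop] at hfr
        obtain ⟨n, hn, h1⟩ := hfr 1
        have h2 : a' * n ≤ g n ω := (mem_iInter.mp hmem n) n hn le_rfl
        have : (b : ℝ) * n ≤ a' * n := mul_le_mul_of_nonneg_right hb.le (Nat.cast_nonneg n)
        linarith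
      rw [ae_iff] at this
      simpa only [not_not, Set.ofPred_mem_eq] using this
    have hβ : Tendsto (fun K => ∫ ω in B K, c ω ∂P) atTop (𝓝 0) := by
      have := Antitone.tendsto_setIntegral hmB hBanti hci.integrableOn
      rwa [setIntegral_measure_zero _ hBnull] at this
    have hsub' : ∀ᵐ ω ∂P, ∀ k n m, g (n + m) (T^[k] ω) ≤ g n (T^[k] ω) + g m (T^[n] (T^[k] ω)) := by
      rw [ae_all_iff]
      intro k
      exact (hT.toMeasurePreserving.iterate k).quasiMeasurePreserving.ae hsub
    have key : ∀ K : ℕ, h ≤ a' + ∫ ω in B K, c ω ∂P := by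
      intro K
      set e : ℕ → Ω → ℝ := fun n ω => (B K).indicator c ω + (if n ≤ K then c ω else 0) with he
      have hind0 : ∀ ω, 0 ≤ (B K).indicator c ω := fun ω => indicator_nonneg (fun x _ => hc0 x) ω
      have hca : ∀ ω, g 1 ω - a' ≤ c ω := by
        intro ω
        have := le_abs_self (g 1 ω)
        have := neg_abs_le a'
        simp only [hc]; linarith
      have he0 : ∀ n ω, 0 ≤ e n ω := by
        intro n ω
        have := hind0 ω
        simp only [he]
        split_ifs
        · linarith [hc0 ω]
        · linarith
      have hei : ∀ n, Integrable (e n) P := by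
        intro n
        refine (hci.indicator (hmB K)).add ?_
        by_cases hn : n ≤ K
        · simpa [hn] using hci
        · simp [hn]
      have hcov := kErr_cover T g a' K e he0 hg0
        (by
          intro n ω hn
          have := hind0 ω
          simp only [he, hn, if_true]
          linarith [hca ω])
        (by
          intro n ω hω
          have : ω ∈ B K := hω
          simp only [he, indicator_of_mem this]
          split_ifs
          · linarith [hca ω, hc0 ω]
          · linarith [hca ω])
      have hγ : 0 ≤ ∫ ω, c ω ∂P := integral_nonneg hc0
      have hintg' := kErr_integral hT.toMeasurePreserving e hei (∫ ω in B K, c ω ∂P) (∫ ω, c ω ∂P) K hγ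
        (by
          intro n
          rw [← integral_indicator (hmB K), ← integral_add (hci.indicator (hmB K)) hci]
          refine integral_mono (hei n) ((hci.indicator (hmB K)).add hci) ?_
          intro ω
          simp only [he, Pi.add_apply]
          split_ifs
          · exact le_rfl
          · linarith [hc0 ω])
        (by
          intro n hn
          rw [← integral_indicator (hmB K)]
          refine integral_mono (hei n) (hci.indicator (hmB K)) ?_
          intro ω
          simp [he, not_le.mpr hn])
      have hM : ∀ M : ℕ, ∫ ω, g M ω ∂P ≤ a' * M + (M * (∫ ω in B K, c ω ∂P) + K * ∫ ω, c ω ∂P) := by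
        intro M
        have h1 : ∫ ω, g M ω ∂P ≤ ∫ ω, (a' * M + kErr T e M ω) ∂P := by
          refine integral_mono_ae (hintg M) ((integrable_const _).add (hintg' M).1) ?_
          filter_upwards [hsub'] with ω hω
          exact hcov M ω hω
        rw [integral_add (integrable_const _) (hintg' M).1] at h1
        have h2 := (hintg' M).2
        have h3 : ((min M K : ℕ) : ℝ) ≤ K := by exact_mod_cast min_le_right _ _
        have h4 := mul_le_mul_of_nonneg_right h3 hγ
        simp at h1
        simp at h2 h4
        linarith
      have hlim : Tendsto (fun M : ℕ => a' + (∫ ω in B K, c ω ∂P) + (K * ∫ ω, c ω ∂P) / M) atTop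
          (𝓝 (a' + (∫ ω in B K, c ω ∂P) + 0)) :=
        tendsto_const_nhds.add (tendsto_const_nhds.div_atTop tendsto_natCast_atTop_atTop)
      rw [add_zero] at hlim
      refine le_of_tendsto_of_tendsto hh hlim ?_
      filter_upwards [eventually_gt_atTop 0] with M hM0
      have hM0' : (0:ℝ) < M := by exact_mod_cast hM0
      rw [div_le_iff₀ hM0']
      have := hM M
      have e1 : (a' + (∫ ω in B K, c ω ∂P) + (K * ∫ ω, c ω ∂P) / M) * M
        = a' * M + (M * (∫ ω in B K, c ω ∂P) + K * ∫ ω, c ω ∂P) := by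
        field_simp
        ring
      linarith
    have hfin : h ≤ a' + 0 :=
      ge_of_tendsto' (tendsto_const_nhds.add hβ) key
    linarith

/-- Pointwise ergodic theorem (upper and lower bounds). -/
lemma birkhoff_upper {Ω : Type*} [MeasurableSpace Ω] {P : Measure Ω} [IsProbabilityMeasure P]
    {T : Ω → Ω} (hT : Ergodic T P) (f : Ω → ℝ) (hf : Measurable f) (hfi : Integrable f P)
    (a : ℝ) (ha : ∫ ω, f ω ∂P < a) :
    ∀ᵐ ω ∂P, ∀ᶠ n : ℕ in atTop, ∑ k ∈ Finset.range n, f (T^[k] ω) ≤ a * n := by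
  have hi : ∀ k, Integrable (fun ω => f (T^[k] ω)) P := fun k =>
    (hT.toMeasurePreserving.iterate k).integrable_comp_of_integrable hfi
  have hsame : ∀ k, ∫ ω, f (T^[k] ω) ∂P = ∫ ω, f ω ∂P := by
    intro k
    have hk := hT.toMeasurePreserving.iterate k
    conv_rhs => rw [← hk.map_eq]
    rw [integral_map hk.measurable.aemeasurable]
    exact hf.aestronglyMeasurable
  have := kingman_lower hT (fun n ω => -∑ k ∈ Finset.range n, f (T^[k] ω))
    (fun n => (Finset.measurable_sum _ fun k _ => hf.comp (hT.measurable.iterate k)).neg)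
    (fun n => (integrable_finsetSum _ fun k _ => hi k).neg) (by simp)
    (Eventually.of_forall (by
      intro ω n m
      rw [Finset.sum_range_add]
      have : ∀ k, T^[k] (T^[n] ω) = T^[n + k] ω := by
        intro k; rw [add_comm, Function.iterate_add_apply]
      simp [this, add_comm])) (-∫ ω, f ω ∂P)
    (by
      refine tendsto_const_nhds.congr' ?_
      filter_upwards [eventually_gt_atTop 0] with n hn
      have hn' : (n:ℝ) ≠ 0 := by positivity
      rw [integral_neg, integral_finsetSum _ (fun k _ => hi k)]
      simp [hsame]
      field_simp) (-a) (by linarith)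
  filter_upwards [this] with ω hω
  filter_upwards [hω] with n hn
  linarith

lemma birkhoff_lower {Ω : Type*} [MeasurableSpace Ω] {P : Measure Ω} [IsProbabilityMeasure P]
    {T : Ω → Ω} (hT : Ergodic T P) (f : Ω → ℝ) (hf : Measurable f) (hfi : Integrable f P)
    (a : ℝ) (ha : a < ∫ ω, f ω ∂P) :
    ∀ᵐ ω ∂P, ∀ᶠ n : ℕ in atTop, a * n ≤ ∑ k ∈ Finset.range n, f (T^[k] ω) := by
  have := birkhoff_upper hT (fun ω => - f ω) hf.neg hfi.neg (-a) (by rw [integral_neg]; linarith)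
  filter_upwards [this] with ω hω
  filter_upwards [hω] with n hn
  simp at hn
  linarith

/-- Individual terms are sublinear. -/
lemma ergodic_term_sublinear {Ω : Type*} [MeasurableSpace Ω] {P : Measure Ω} [IsProbabilityMeasure P]
    {T : Ω → Ω} (hT : Ergodic T P) (f : Ω → ℝ) (hf : Measurable f) (hfi : Integrable f P)
    (ε : ℝ) (hε : 0 < ε) :
    ∀ᵐ ω ∂P, ∀ᶠ n : ℕ in atTop, f (T^[n] ω) ≤ ε * n := by
  set E := ∫ ω, f ω ∂P
  have h1 := birkhoff_upper hT f hf hfi (E + ε / 4) (by linarith)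
  have h2 := birkhoff_lower hT f hf hfi (E - ε / 4) (by linarith)
  filter_upwards [h1, h2] with ω hu hl
  have hu' := (tendsto_add_atTop_nat 1).eventually hu
  have hc : ∀ᶠ n : ℕ in atTop, (2 * |E| / ε + 1) ≤ n := tendsto_natCast_atTop_atTop.eventually_ge_atTop _
  filter_upwards [hu', hl, hc] with n h3 h4 h5
  rw [Finset.sum_range_succ] at h3
  push_cast at h3
  have h6 : 2 * |E| + ε ≤ ε * n := by
    have := mul_le_mul_of_nonneg_left h5 hε.le
    have e1 : ε * (2 * |E| / ε + 1) = 2 * |E| + ε := by field_simp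
    linarith
  have := le_abs_self E
  nlinarith [abs_nonneg E]

set_option linter.unusedSectionVars false
set_option linter.style.haveILetI false
set_option linter.unusedVariables false
set_option linter.unusedSimpArgs false

/-! ### Path space of the random walk -/

/-- The shift on increments. -/
def shiftS {G : Type*} (ω : ℕ → G) : ℕ → G := fun n => ω (n + 1)

/-- Prepend an increment. -/
def consS {G : Type*} (g : G) (ω : ℕ → G) : ℕ → G := fun n => Nat.casesOn n g ω

lemma shiftS_consS {G : Type*} (g : G) (ω : ℕ → G) : shiftS (consS g ω) = ω := rfl
lemma consS_zero {G : Type*} (g : G) (ω : ℕ → G) : consS g ω 0 = g := rfl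
lemma consS_succ {G : Type*} (g : G) (ω : ℕ → G) (n : ℕ) : consS g ω (n + 1) = ω n := rfl
lemma shiftS_iter {G : Type*} (n : ℕ) : ∀ (ω : ℕ → G) (k : ℕ), (shiftS^[n] ω) k = ω (k + n) := by
  induction n with
  | zero => intro ω k; rfl
  | succ n ih =>
    intro ω k
    rw [Function.iterate_succ_apply, ih]
    show ω (k + n + 1) = _
    rw [add_assoc]

lemma measurable_shiftS {G : Type*} [MeasurableSpace G] : Measurable (shiftS (G := G)) :=
  measurable_pi_lambda _ fun n => measurable_pi_apply (n + 1)

lemma measurable_consS {G : Type*} [MeasurableSpace G] (g : G) : Measurable (consS g) := by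
  refine measurable_pi_lambda _ fun n => ?_
  cases n with
  | zero => exact measurable_const
  | succ n => exact measurable_pi_apply n

lemma measurableSet_cyl {G : Type*} [MeasurableSpace G] [DiscreteMeasurableSpace G]
    (n : ℕ) (g : ℕ → G) : MeasurableSet {ω : ℕ → G | ∀ i < n, ω i = g i} := by
  have : {ω : ℕ → G | ∀ i < n, ω i = g i} = ⋂ i : ℕ, ⋂ (_ : i < n), (fun ω : ℕ → G => ω i) ⁻¹' {g i} := by
    ext ω; simp
  rw [this]
  exact MeasurableSet.iInter fun i => MeasurableSet.iInter fun _ =>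
    measurable_pi_apply i (MeasurableSet.of_discrete)

lemma cyl_generate {G : Type*} [Nonempty G] [Countable G] [MeasurableSpace G] [DiscreteMeasurableSpace G] :
    (MeasurableSpace.pi : MeasurableSpace (ℕ → G)) =
      MeasurableSpace.generateFrom {s | ∃ (n : ℕ) (g : ℕ → G), s = {ω : ℕ → G | ∀ i < n, ω i = g i}} := by
  apply le_antisymm
  · refine iSup_le fun i => ?_
    rintro s ⟨t, -, rfl⟩
    have : (fun ω : ℕ → G => ω i) ⁻¹' t = ⋃ σ : (Fin (i + 1) → G), ⋃ (_ : σ (Fin.last i) ∈ t),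
        {ω : ℕ → G | ∀ j < i + 1, ω j =
          (fun j : ℕ => if h : j < i + 1 then σ ⟨j, h⟩ else Classical.arbitrary G) j} := by
      ext ω
      simp only [mem_preimage, mem_iUnion, exists_prop]
      constructor
      · intro h
        refine ⟨fun j => ω j, h, ?_⟩
        intro j hj
        simp [hj]
      · rintro ⟨σ, hσ, h⟩
        have := h i (Nat.lt_succ_self i)
        simp at this
        rw [this]; exact hσ
    rw [this]
    refine MeasurableSet.iUnion fun σ => MeasurableSet.iUnion fun _ => ?_
    exact MeasurableSpace.measurableSet_generateFrom ⟨_, _, rfl⟩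
  · apply MeasurableSpace.generateFrom_le
    rintro s ⟨n, g, rfl⟩
    exact measurableSet_cyl n g

lemma cyl_piSystem {G : Type*} :
    IsPiSystem {s | ∃ (n : ℕ) (g : ℕ → G), s = {ω : ℕ → G | ∀ i < n, ω i = g i}} := by
  rintro s ⟨n, g, rfl⟩ t ⟨m, h, rfl⟩ ⟨ω, hω1, hω2⟩
  refine ⟨max n m, ω, ?_⟩
  ext ω'
  constructor
  · rintro ⟨h1, h2⟩ i hi
    rcases lt_max_iff.mp hi with h' | h'
    · rw [h1 i h', hω1 i h']
    · rw [h2 i h', hω2 i h']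
  · intro h'
    exact ⟨fun i hi => (h' i (lt_max_of_lt_left hi)).trans (hω1 i hi),
      fun i hi => (h' i (lt_max_of_lt_right hi)).trans (hω2 i hi)⟩

section RW
variable {G : Type*} [Group G] [Countable G] [MeasurableSpace G] [DiscreteMeasurableSpace G]
  {p : G → ℝ≥0∞} {P : Measure (ℕ → G)}

lemma rw_decomp (hp : IsProb p) (hP : IsRWMeasure p P) :
    P = Measure.sum (fun g => p g • P.map (consS g)) := by
  have := hP.1
  refine ext_of_generate_finite _ cyl_generate cyl_piSystem ?_ ?_
  · rintro s ⟨n, h, rfl⟩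
    rw [Measure.sum_apply _ (measurableSet_cyl n h)]
    simp only [Measure.smul_apply, smul_eq_mul]
    simp_rw [Measure.map_apply (measurable_consS _) (measurableSet_cyl n h)]
    rw [hP.2]
    cases n with
    | zero =>
      simp
      exact hp.symm
    | succ n =>
      rw [tsum_eq_single (h 0)]
      · have : consS (h 0) ⁻¹' {ω : ℕ → G | ∀ i < n + 1, ω i = h i}
            = {ω | ∀ i < n, ω i = (fun i => h (i + 1)) i} := by
          ext ω
          constructor
          · intro h' i hi
            exact h' (i + 1) (by omega)
          · intro h' i hi
            cases i with
            | zero => rfl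
            | succ i => exact h' i (by omega)
        rw [this, hP.2, Finset.prod_range_succ', mul_comm]
      · intro g hg
        have : consS g ⁻¹' {ω : ℕ → G | ∀ i < n + 1, ω i = h i} = ∅ := by
          ext ω
          simp only [mem_empty_iff_false, iff_false]
          intro h'
          exact hg (h' 0 (by omega))
        rw [this]; simp
  · rw [Measure.sum_apply _ MeasurableSet.univ]
    simp only [Measure.smul_apply, smul_eq_mul]
    simp_rw [Measure.map_apply (measurable_consS _) MeasurableSet.univ]
    simp
    exact hp.symm

lemma rw_lintegral (hp : IsProb p) (hP : IsRWMeasure p P) (F : (ℕ → G) → ℝ≥0∞) (hF : Measurable F) :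
    ∫⁻ ω, F ω ∂P = ∑' g, p g * ∫⁻ ω, F (consS g ω) ∂P := by
  conv_lhs => rw [rw_decomp hp hP]
  rw [lintegral_sum_measure]
  congr 1
  ext g
  rw [lintegral_smul_measure, lintegral_map hF (measurable_consS g), smul_eq_mul]

lemma rw_measure (hp : IsProb p) (hP : IsRWMeasure p P) (A : Set (ℕ → G)) (hA : MeasurableSet A) :
    P A = ∑' g, p g * P (consS g ⁻¹' A) := by
  conv_lhs => rw [rw_decomp hp hP]
  rw [Measure.sum_apply _ hA]
  simp only [Measure.smul_apply, smul_eq_mul]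
  simp_rw [Measure.map_apply (measurable_consS _) hA]

lemma measurableSet_first (g : G) (A : Set (ℕ → G)) (hA : MeasurableSet A) :
    MeasurableSet {ω : ℕ → G | ω 0 = g ∧ shiftS ω ∈ A} := by
  have h1 : MeasurableSet ((fun ω : ℕ → G => ω 0) ⁻¹' {g}) :=
    measurable_pi_apply 0 (MeasurableSet.of_discrete)
  have h2 := h1.inter (measurable_shiftS hA)
  have h3 : {ω : ℕ → G | ω 0 = g ∧ shiftS ω ∈ A} = (fun ω : ℕ → G => ω 0) ⁻¹' {g} ∩ shiftS ⁻¹' A := by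
    ext ω; simp
  rw [h3]; exact h2

lemma rw_first (hp : IsProb p) (hP : IsRWMeasure p P) (g : G) (A : Set (ℕ → G)) (hA : MeasurableSet A) :
    P {ω | ω 0 = g ∧ shiftS ω ∈ A} = p g * P A := by
  have hm := measurableSet_first g A hA
  rw [rw_measure hp hP _ hm, tsum_eq_single g]
  · congr 2
    ext ω
    simp [consS_zero, shiftS_consS]
  · intro g' hg'
    have : consS g' ⁻¹' {ω : ℕ → G | ω 0 = g ∧ shiftS ω ∈ A} = ∅ := by
      ext ω
      simp [consS_zero, hg']
    rw [this]; simp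

lemma rw_shift_mp (hp : IsProb p) (hP : IsRWMeasure p P) : MeasurePreserving shiftS P P := by
  refine ⟨measurable_shiftS, ?_⟩
  ext A hA
  rw [Measure.map_apply measurable_shiftS hA, rw_measure hp hP _ (measurable_shiftS hA)]
  have : ∀ g : G, consS g ⁻¹' (shiftS ⁻¹' A) = A := fun g => by ext ω; rfl
  simp_rw [this]
  rw [ENNReal.tsum_mul_right, hp, one_mul]

lemma rw_cyl_indep (hp : IsProb p) (hP : IsRWMeasure p P) (A : Set (ℕ → G)) (hA : MeasurableSet A) :
    ∀ (n : ℕ) (g : ℕ → G), P ({ω | ∀ i < n, ω i = g i} ∩ shiftS^[n] ⁻¹' A)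
      = P {ω | ∀ i < n, ω i = g i} * P A := by
  have := hP.1
  intro n
  induction n with
  | zero => intro g; simp
  | succ n ih =>
    intro g
    have e1 : ({ω : ℕ → G | ∀ i < n + 1, ω i = g i} ∩ shiftS^[n + 1] ⁻¹' A)
        = {ω | ω 0 = g 0 ∧ shiftS ω ∈ ({ω | ∀ i < n, ω i = (fun i => g (i + 1)) i} ∩ shiftS^[n] ⁻¹' A)} := by
      ext ω
      constructor
      · rintro ⟨h1, h2⟩
        refine ⟨h1 0 (by omega), fun i hi => h1 (i + 1) (by omega), ?_⟩
        rwa [mem_preimage, Function.iterate_succ_apply] at h2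
      · rintro ⟨h0, h1, h2⟩
        refine ⟨fun i hi => ?_, ?_⟩
        · cases i with
          | zero => exact h0
          | succ i => exact h1 i (by omega)
        · rwa [mem_preimage, Function.iterate_succ_apply]
    rw [e1, rw_first hp hP _ _ ((measurableSet_cyl _ _).inter ((measurable_shiftS.iterate n) hA)), ih,
      hP.2, hP.2, Finset.prod_range_succ', mul_comm _ (p (g 0)), mul_assoc]

lemma rw_ergodic (hp : IsProb p) (hP : IsRWMeasure p P) (M : ℕ) (hM : 1 ≤ M) :
    Ergodic (shiftS^[M]) P := by
  have := hP.1
  have hmp := rw_shift_mp hp hP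
  refine ⟨hmp.iterate M, ⟨?_⟩⟩
  intro A hA hinv
  have hinvn : ∀ n : ℕ, shiftS^[M * n] ⁻¹' A = A := by
    intro n
    rw [Function.iterate_mul]
    induction n with
    | zero => simp
    | succ n ih =>
      rw [Function.iterate_succ', preimage_comp, hinv, ih]
  have hcyl : ∀ (n : ℕ) (g : ℕ → G), P ({ω | ∀ i < n, ω i = g i} ∩ A)
      = P {ω | ∀ i < n, ω i = g i} * P A := by
    intro n g
    obtain ⟨k, hk⟩ : ∃ k, M * n = k + n := ⟨M * n - n, by
      have : n ≤ M * n := Nat.le_mul_of_pos_left n hM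
      omega⟩
    have h1 : A = shiftS^[n] ⁻¹' (shiftS^[k] ⁻¹' A) := by
      rw [← preimage_comp, ← Function.iterate_add, ← hk, hinvn]
    conv_lhs => rw [h1]
    rw [rw_cyl_indep hp hP _ ((measurable_shiftS.iterate k) hA), (hmp.iterate k).measure_preimage hA.nullMeasurableSet]
  have hall : P.restrict A = (P A) • P := by
    refine ext_of_generate_finite _ cyl_generate cyl_piSystem ?_ ?_
    · rintro s ⟨n, g, rfl⟩
      rw [Measure.restrict_apply (measurableSet_cyl n g), hcyl, Measure.smul_apply, smul_eq_mul, mul_comm]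
    · simp
  have h2 : P A = P A * P A := by
    have := congrArg (fun m => m A) hall
    simpa using this
  have h3 : P A = 0 ∨ P A = 1 := by
    rcases eq_or_ne (P A) 0 with h | h
    · exact Or.inl h
    · right
      have hne : P A ≠ ⊤ := measure_ne_top _ _
      have := (ENNReal.mul_right_inj h hne (b := 1) (c := P A)).mp (by rw [mul_one]; exact h2)
      exact this.symm
  rw [eventuallyConst_set']
  rcases h3 with h | h
  · left; exact ae_eq_empty.mpr h
  · right
    rw [eventuallyEq_univ]
    exact (prob_compl_eq_zero_iff hA).mpr h

lemma walk_zero (ω : ℕ → G) : walk ω 0 = 1 := by simp [walk]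

lemma walk_succ (ω : ℕ → G) (n : ℕ) : walk ω (n + 1) = walk ω n * ω n := by
  simp [walk, List.range_succ]

lemma walk_add (ω : ℕ → G) (n m : ℕ) : walk ω (n + m) = walk ω n * walk (shiftS^[n] ω) m := by
  induction m with
  | zero => simp [walk_zero]
  | succ m ih => rw [← add_assoc, walk_succ, ih, walk_succ, shiftS_iter, mul_assoc, add_comm m n]

lemma walk_one (ω : ℕ → G) : walk ω 1 = ω 0 := by rw [walk_succ, walk_zero, one_mul]

lemma walk_consS (g : G) (ω : ℕ → G) (n : ℕ) : walk (consS g ω) (n + 1) = g * walk ω n := by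
  rw [add_comm, walk_add, walk_one]; rfl

lemma measurable_walk (n : ℕ) : Measurable (fun ω : ℕ → G => walk ω n) := by
  induction n with
  | zero => simp only [walk_zero]; exact measurable_const
  | succ n ih =>
    simp only [walk_succ]
    exact (measurable_of_countable (fun z : G × G => z.1 * z.2)).comp (ih.prodMk (measurable_pi_apply n))

lemma measurableSet_walk (n : ℕ) (x : G) : MeasurableSet {ω : ℕ → G | walk ω n = x} :=
  measurable_walk n (MeasurableSet.of_discrete (s := {x}))

lemma rw_walk_indep (hp : IsProb p) (hP : IsRWMeasure p P) :
    ∀ (n : ℕ) (x : G) (A : Set (ℕ → G)), MeasurableSet A →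
      P {ω | walk ω n = x ∧ shiftS^[n] ω ∈ A} = piN p n x * P A := by
  intro n
  induction n with
  | zero =>
    intro x A hA
    by_cases hx : x = 1
    · subst hx; simp [walk_zero, piN]
    · simp [walk_zero, piN, hx, Ne.symm hx]
  | succ n ih =>
    intro x A hA
    have e1 : {ω : ℕ → G | walk ω (n + 1) = x ∧ shiftS^[n + 1] ω ∈ A}
        = ⋃ y : G, {ω | walk ω n = y ∧ shiftS^[n] ω ∈ {ω' : ℕ → G | ω' 0 = y⁻¹ * x ∧ shiftS ω' ∈ A}} := by
      ext ω
      simp only [mem_iUnion, mem_ofPred_eq, shiftS_iter, zero_add, walk_succ, Function.iterate_succ_apply']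
      constructor
      · rintro ⟨h1, h2⟩
        exact ⟨_, rfl, by rw [← h1]; group, h2⟩
      · rintro ⟨y, h1, h2, h3⟩
        exact ⟨by rw [h1, h2]; group, h3⟩
    have hm : ∀ y, MeasurableSet {ω' : ℕ → G | ω' 0 = y⁻¹ * x ∧ shiftS ω' ∈ A} := fun y =>
      measurableSet_first _ A hA
    rw [e1, measure_iUnion]
    · simp_rw [ih _ _ (hm _), rw_first hp hP _ _ hA]
      simp only [piN, conv]
      rw [← ENNReal.tsum_mul_right]
      simp_rw [mul_assoc]
    · intro y z hyz
      rw [Function.onFun, Set.disjoint_left]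
      rintro ω ⟨h1, _⟩ ⟨h2, _⟩
      exact hyz (h1.symm.trans h2)
    · intro y
      exact (measurableSet_walk n y).inter ((measurable_shiftS.iterate n) (hm y))

lemma rw_walk_law (hp : IsProb p) (hP : IsRWMeasure p P) (n : ℕ) (x : G) :
    P {ω | walk ω n = x} = piN p n x := by
  have := hP.1
  have := rw_walk_indep hp hP n x univ MeasurableSet.univ
  simpa using this

lemma piN_first (hp : IsProb p) (hP : IsRWMeasure p P) (n : ℕ) (x : G) :
    piN p (n + 1) x = ∑' g, p g * piN p n (g⁻¹ * x) := by
  rw [← rw_walk_law hp hP, rw_measure hp hP _ (measurableSet_walk (n+1) x)]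
  congr 1
  ext g
  rw [← rw_walk_law hp hP]
  congr 2
  ext ω
  simp only [mem_preimage, mem_ofPred_eq, walk_consS, mem_singleton_iff]
  exact (eq_inv_mul_iff_mul_eq (a := walk ω n) (b := g) (c := x)).symm

lemma piN_le_one (hp : IsProb p) (hP : IsRWMeasure p P) (n : ℕ) (x : G) : piN p n x ≤ 1 := by
  have := hP.1
  rw [← rw_walk_law hp hP]; exact prob_le_one

lemma piN_ne_top (hp : IsProb p) (hP : IsRWMeasure p P) (n : ℕ) (x : G) : piN p n x ≠ ⊤ :=
  ne_top_of_le_ne_top ENNReal.one_ne_top (piN_le_one hp hP n x)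

lemma piN_mul_le (hp : IsProb p) (hP : IsRWMeasure p P) (n m : ℕ) (x y : G) :
    piN p n x * piN p m y ≤ piN p (n + m) (x * y) := by
  rw [← rw_walk_law hp hP m y, ← rw_walk_indep hp hP n x _ (measurableSet_walk m y),
    ← rw_walk_law hp hP]
  apply measure_mono
  rintro ω ⟨h1, h2⟩
  have h2' : walk (shiftS^[n] ω) m = y := h2
  show walk ω (n + m) = x * y
  rw [walk_add, h1, h2']

lemma piN_pos_ae (hp : IsProb p) (hP : IsRWMeasure p P) :
    ∀ᵐ ω ∂P, ∀ n, piN p n (walk ω n) ≠ 0 := by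
  rw [ae_all_iff]
  intro n
  rw [ae_iff]
  have : {ω : ℕ → G | ¬ piN p n (walk ω n) ≠ 0} = ⋃ x : {x : G // piN p n x = 0}, {ω : ℕ → G | walk ω n = (x : G)} := by
    ext ω; simp
  rw [this, measure_iUnion_null_iff]
  intro x
  rw [rw_walk_law hp hP]; exact x.2

lemma piN_one (hp : IsProb p) (hP : IsRWMeasure p P) (x : G) : piN p 1 x = p x := by
  rw [show (1 : ℕ) = 0 + 1 from rfl, piN_first hp hP, tsum_eq_single x]
  · simp [piN]
  · intro g hg
    have : ¬ (g⁻¹ * x = 1) := by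
      intro h
      exact hg (inv_mul_eq_one.mp h)
    simp [piN, this]

/-- Integrals of functions of `w_n`. -/
lemma rw_map_walk (hp : IsProb p) (hP : IsRWMeasure p P) (n : ℕ) (φ : G → ℝ) (hφ : Integrable (fun ω => φ (walk ω n)) P) :
    HasSum (fun x => (piN p n x).toReal * φ x) (∫ ω, φ (walk ω n) ∂P) := by
  have := hP.1
  have hm := measurable_walk (G := G) n
  have hφ' : Integrable φ (P.map (fun ω => walk ω n)) :=
    (integrable_map_measure (measurable_of_countable φ).aestronglyMeasurable hm.aemeasurable).mpr hφ
  rw [← integral_map (φ := fun ω => walk ω n) (f := φ) hm.aemeasurable (measurable_of_countable φ).aestronglyMeasurable]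
  have hval : ∀ x, (P.map (fun ω => walk ω n)) {x} = piN p n x := by
    intro x
    rw [Measure.map_apply hm (MeasurableSet.of_discrete), ← rw_walk_law hp hP]
    rfl
  have hs := hasSum_integral_measure (μ := fun x => (P.map (fun ω => walk ω n)) {x} • Measure.dirac x)
    (f := φ) (by rwa [Measure.sum_smul_dirac])
  rw [Measure.sum_smul_dirac] at hs
  have e1 : (fun x => (piN p n x).toReal * φ x) =
      (fun i => ∫ x, φ x ∂((P.map (fun ω => walk ω n)) {i} • Measure.dirac i)) := by
    funext x
    rw [integral_smul_measure, integral_dirac, hval, smul_eq_mul]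
  rw [e1]
  exact hs

end RW

/-! ### Length functions, drift and entropy along the walk -/

section Len
variable {G : Type*} [Group G] [Countable G] [MeasurableSpace G] [DiscreteMeasurableSpace G]
  {p : G → ℝ≥0∞} {P : Measure (ℕ → G)}

lemma integrable_first (hp : IsProb p) (hP : IsRWMeasure p P) (φ : G → ℝ) (hφ0 : ∀ g, p g ≠ 0 → 0 ≤ φ g)
    (hφ : ∑' g, p g * ENNReal.ofReal (φ g) ≠ ∞) : Integrable (fun ω : ℕ → G => φ (ω 0)) P := by
  have := hP.1
  have hm : Measurable (fun ω : ℕ → G => φ (ω 0)) := (measurable_of_countable φ).comp (measurable_pi_apply 0)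
  refine ⟨hm.aestronglyMeasurable, ?_⟩
  rw [HasFiniteIntegral, rw_lintegral hp hP _ hm.enorm]
  simp only [consS_zero, lintegral_const, measure_univ, mul_one]
  refine lt_of_le_of_lt (ENNReal.tsum_le_tsum fun g => ?_) (lt_top_iff_ne_top.mpr hφ)
  by_cases hg : p g = 0
  · simp [hg]
  · rw [Real.enorm_eq_ofReal (hφ0 g hg)]

lemma shift_eval (ω : ℕ → G) (n : ℕ) : (shiftS^[n] ω) 0 = ω n := by rw [shiftS_iter, zero_add]

variable {f : G → ℝ}

lemma len_le_sum (h1 : f 1 = 0) (hmul : ∀ x y, f (x * y) ≤ f x + f y) (ω : ℕ → G) (n : ℕ) :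
    f (walk ω n) ≤ ∑ k ∈ Finset.range n, f (ω k) := by
  induction n with
  | zero => simp [walk_zero, h1]
  | succ n ih => rw [walk_succ, Finset.sum_range_succ]; linarith [hmul (walk ω n) (ω n)]

lemma len_integrable (hp : IsProb p) (hP : IsRWMeasure p P) (h0 : ∀ x, 0 ≤ f x) (h1 : f 1 = 0)
    (hmul : ∀ x y, f (x * y) ≤ f x + f y) (hmom : FiniteFirstMoment p f) (n : ℕ) :
    Integrable (fun ω => f (walk ω n)) P := by
  have hi := integrable_first hp hP f (fun g _ => h0 g) hmom
  have hik : ∀ k, Integrable (fun ω : ℕ → G => f (ω k)) P := by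
    intro k
    have := ((rw_shift_mp hp hP).iterate k).integrable_comp_of_integrable hi
    refine this.congr (Eventually.of_forall fun ω => ?_)
    simp [shift_eval]
  refine Integrable.mono' (integrable_finsetSum (Finset.range n) fun k _ => hik k)
    ((measurable_of_countable f).comp (measurable_walk n)).aestronglyMeasurable ?_
  refine Eventually.of_forall fun ω => ?_
  rw [Real.norm_eq_abs, abs_of_nonneg (h0 _)]
  exact len_le_sum h1 hmul ω n

lemma len_moment (hp : IsProb p) (hP : IsRWMeasure p P) (h0 : ∀ x, 0 ≤ f x) (h1 : f 1 = 0)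
    (hmul : ∀ x y, f (x * y) ≤ f x + f y) (hmom : FiniteFirstMoment p f) (n : ℕ) :
    ∫ ω, f (walk ω n) ∂P = momentSeq p f n :=
  (rw_map_walk hp hP n f (len_integrable hp hP h0 h1 hmul hmom n)).tsum_eq.symm

lemma integral_shift (hp : IsProb p) (hP : IsRWMeasure p P) (n : ℕ) (φ : (ℕ → G) → ℝ) (hφ : Measurable φ) :
    ∫ ω, φ (shiftS^[n] ω) ∂P = ∫ ω, φ ω ∂P := by
  have hk := (rw_shift_mp hp hP).iterate n
  conv_rhs => rw [← hk.map_eq]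
  rw [integral_map hk.measurable.aemeasurable]
  exact hφ.aestronglyMeasurable

lemma len_drift_exists (hp : IsProb p) (hP : IsRWMeasure p P) (h0 : ∀ x, 0 ≤ f x) (h1 : f 1 = 0)
    (hmul : ∀ x y, f (x * y) ≤ f x + f y) (hmom : FiniteFirstMoment p f) :
    ∃ l, HasDrift p f l := by
  have hintg := len_integrable hp hP h0 h1 hmul hmom
  have hms : ∀ n, Measurable (fun ω : ℕ → G => f (walk ω n)) := fun n =>
    (measurable_of_countable f).comp (measurable_walk n)
  have hs : Subadditive (momentSeq p f) := by
    intro m n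
    rw [← len_moment hp hP h0 h1 hmul hmom, ← len_moment hp hP h0 h1 hmul hmom,
      ← len_moment hp hP h0 h1 hmul hmom, ← integral_shift hp hP m (fun ω => f (walk ω n)) (hms n)]
    have hi2 : Integrable (fun ω => f (walk (shiftS^[m] ω) n)) P :=
      ((rw_shift_mp hp hP).iterate m).integrable_comp_of_integrable (hintg n)
    rw [← integral_add (hintg m) hi2]
    refine integral_mono (hintg _) ((hintg m).add hi2) fun ω => ?_
    simp only [walk_add]
    exact hmul _ _
  refine ⟨hs.lim, hs.tendsto_lim ⟨0, ?_⟩⟩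
  rintro _ ⟨n, rfl⟩
  refine div_nonneg ?_ (Nat.cast_nonneg n)
  rw [← len_moment hp hP h0 h1 hmul hmom]
  exact integral_nonneg fun ω => h0 _

lemma len_lln (hp : IsProb p) (hP : IsRWMeasure p P) (h0 : ∀ x, 0 ≤ f x) (h1 : f 1 = 0)
    (hmul : ∀ x y, f (x * y) ≤ f x + f y) (hmom : FiniteFirstMoment p f) (l : ℝ) (hl : HasDrift p f l)
    (ε : ℝ) (hε : 0 < ε) :
    ∀ᵐ ω ∂P, ∀ᶠ n : ℕ in atTop, (l - ε) * n ≤ f (walk ω n) ∧ f (walk ω n) ≤ (l + ε) * n ∧ f (ω n) ≤ ε * n := by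
  have := hP.1
  have hintg := len_integrable hp hP h0 h1 hmul hmom
  have hms : ∀ n, Measurable (fun ω : ℕ → G => f (walk ω n)) := fun n =>
    (measurable_of_countable f).comp (measurable_walk n)
  have hlm : Tendsto (fun n : ℕ => (∫ ω, f (walk ω n) ∂P) / n) atTop (𝓝 l) := by
    simp_rw [len_moment hp hP h0 h1 hmul hmom]; exact hl
  have hl0 : 0 ≤ l := ge_of_tendsto' hlm fun n =>
    div_nonneg (integral_nonneg fun ω => h0 _) (Nat.cast_nonneg n)
  have herg : Ergodic shiftS P := by simpa using rw_ergodic hp hP 1 le_rfl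
  have hlow := kingman_lower herg (fun n ω => f (walk ω n)) hms hintg (by simp [walk_zero, h1])
    (Eventually.of_forall fun ω n m => by simp only [walk_add]; exact hmul _ _) l hlm (l - ε) (by linarith)
  have hterm : ∀ ε' : ℝ, 0 < ε' → ∀ᵐ ω ∂P, ∀ᶠ n : ℕ in atTop, f (ω n) ≤ ε' * n := by
    intro ε' hε'
    have := ergodic_term_sublinear herg (fun ω => f (ω 0))
      ((measurable_of_countable f).comp (measurable_pi_apply 0))
      (integrable_first hp hP f (fun g _ => h0 g) hmom) ε' hε'
    simpa only [shift_eval] using this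
  obtain ⟨M, hM1, hM⟩ : ∃ M : ℕ, 1 ≤ M ∧ (∫ ω, f (walk ω M) ∂P) / M < l + ε / 2 := by
    have := (hlm.eventually (gt_mem_nhds (show l < l + ε / 2 by linarith))).and (eventually_ge_atTop 1)
    obtain ⟨M, h1, h2⟩ := this.exists
    exact ⟨M, h2, h1⟩
  have hMpos : (0:ℝ) < M := by exact_mod_cast hM1
  rw [div_lt_iff₀ hMpos] at hM
  have hup := birkhoff_upper (rw_ergodic hp hP M hM1) (fun ω => f (walk ω M)) (hms M) (hintg M) _ hM
  have hblock : ∀ (ω : ℕ → G) (k : ℕ), f (walk ω (M * k)) ≤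
      ∑ j ∈ Finset.range k, f (walk ((shiftS^[M])^[j] ω) M) := by
    intro ω k
    induction k with
    | zero => simp [walk_zero, h1]
    | succ k ih =>
      rw [Finset.sum_range_succ, Nat.mul_succ, walk_add, ← Function.iterate_mul]
      linarith [hmul (walk ω (M * k)) (walk (shiftS^[M * k] ω) M)]
  have hrem : ∀ (ω : ℕ → G) (m r : ℕ), f (walk ω (m + r)) ≤ f (walk ω m) + ∑ i ∈ Finset.range r, f (ω (m + i)) := by
    intro ω m r
    rw [walk_add]
    have h2 := len_le_sum h1 hmul (shiftS^[m] ω) r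
    simp only [shiftS_iter] at h2
    simp only [add_comm m]
    linarith [hmul (walk ω m) (walk (shiftS^[m] ω) r)]
  filter_upwards [hlow, hterm ε hε, hterm (ε / (2 * M)) (by positivity), hup] with ω hw1 hw2 hw3 hw4
  have hdiv : Tendsto (fun n : ℕ => n / M) atTop atTop := Nat.tendsto_div_const_atTop (by omega)
  obtain ⟨N, hN⟩ := eventually_atTop.mp hw3
  have hge : ∀ᶠ n : ℕ in atTop, N ≤ n / M := hdiv.eventually_ge_atTop N
  filter_upwards [hw1, hw2, hdiv.eventually hw4, hge] with n ha hb hc hd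
  refine ⟨ha, ?_, hb⟩
  have hn : M * (n / M) + n % M = n := Nat.div_add_mod n M
  have hr := hrem ω (M * (n / M)) (n % M)
  rw [hn] at hr
  have hbk := (hblock ω (n / M)).trans hc
  have hsum : ∑ i ∈ Finset.range (n % M), f (ω (M * (n / M) + i)) ≤ ∑ i ∈ Finset.range (n % M), ε / (2 * M) * n := by
    refine Finset.sum_le_sum fun i hi => ?_
    have hi' := Finset.mem_range.mp hi
    have hNle : N ≤ M * (n / M) + i := by
      have : n / M ≤ M * (n / M) := Nat.le_mul_of_pos_left _ (by omega)
      omega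
    refine (hN _ hNle).trans ?_
    refine mul_le_mul_of_nonneg_left ?_ (by positivity)
    exact_mod_cast (by omega : M * (n / M) + i ≤ n)
  rw [Finset.sum_const, Finset.card_range, nsmul_eq_mul] at hsum
  have hrM : ((n % M : ℕ) : ℝ) ≤ M := by exact_mod_cast (Nat.mod_lt n (by omega)).le
  have h5 : ((n % M : ℕ) : ℝ) * (ε / (2 * M) * n) ≤ M * (ε / (2 * M) * n) :=
    mul_le_mul_of_nonneg_right hrM (by positivity)
  have h6 : (M : ℝ) * (ε / (2 * M) * n) = ε / 2 * n := by field_simp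
  have h7 : (M : ℝ) * ((n / M : ℕ) : ℝ) ≤ n := by exact_mod_cast (by omega : M * (n / M) ≤ n)
  have h8 : (l + ε / 2) * (M * ((n / M : ℕ) : ℝ)) ≤ (l + ε / 2) * n :=
    mul_le_mul_of_nonneg_left h7 (by linarith)
  have h9 : (l + ε / 2) * M * ((n / M : ℕ) : ℝ) = (l + ε / 2) * (M * ((n / M : ℕ) : ℝ)) := by ring
  linarith

/-- Finiteness of the entropy from finite first moment and exponential growth. -/
lemma entropy_finite (hp : IsProb p) (hP : IsRWMeasure p P) (h0 : ∀ x, 0 ≤ f x)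
    (hmom : FiniteFirstMoment p f) (hgrow : FinExpGrowth f) :
    Integrable (fun ω : ℕ → G => -Real.log (p (ω 0)).toReal) P := by
  have hple : ∀ g, p g ≤ 1 := fun g => by rw [← hp]; exact ENNReal.le_tsum g
  have hpt : ∀ g, p g ≠ ⊤ := fun g => ne_top_of_le_ne_top ENNReal.one_ne_top (hple g)
  have hpr : ∀ g, (p g).toReal ≤ 1 := fun g => by
    have := ENNReal.toReal_mono ENNReal.one_ne_top (hple g)
    simpa using this
  have hlog0 : ∀ g, 0 ≤ -Real.log (p g).toReal := fun g =>
    neg_nonneg.mpr (Real.log_nonpos ENNReal.toReal_nonneg (hpr g))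
  refine integrable_first hp hP (fun g => -Real.log (p g).toReal) (fun g _ => hlog0 g) ?_
  obtain ⟨c, hc, hcount⟩ := hgrow
  set A := c + 1 with hA
  have hA0 : 0 < A := by linarith
  -- the exponential sum
  have hexp : ∑' x : G, ENNReal.ofReal (Real.exp (-(A * f x))) ≠ ∞ := by
    have hle : ∀ x : G, ENNReal.ofReal (Real.exp (-(A * f x))) ≤
        ∑' k : ℕ, (if f x < (k : ℝ) + 1 then ENNReal.ofReal (Real.exp (-(A * k))) else 0) := by
      intro x
      refine le_trans ?_ (ENNReal.le_tsum ⌊f x⌋₊)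
      rw [if_pos (Nat.lt_floor_add_one (f x))]
      apply ENNReal.ofReal_le_ofReal
      apply Real.exp_le_exp.mpr
      have := Nat.floor_le (h0 x)
      nlinarith
    refine ne_top_of_le_ne_top ?_ (ENNReal.tsum_le_tsum hle)
    rw [ENNReal.tsum_comm]
    have hk : ∀ k : ℕ, (∑' x : G, if f x < (k : ℝ) + 1 then ENNReal.ofReal (Real.exp (-(A * k))) else 0)
        ≤ ENNReal.ofReal (c * Real.exp c) * ENNReal.ofReal (Real.exp (-1)) ^ k := by
      intro k
      obtain ⟨hfin, hcard⟩ := hcount ((k : ℝ) + 1) (by positivity)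
      rw [tsum_eq_sum (s := hfin.toFinset) (by
        intro x hx
        have : ¬ f x < (k : ℝ) + 1 := by simpa using hx
        simp [this])]
      refine (Finset.sum_le_card_nsmul _ _ (ENNReal.ofReal (Real.exp (-(A * k)))) ?_).trans ?_
      · intro x hx
        split_ifs
        · exact le_rfl
        · exact zero_le
      · rw [← Set.ncard_eq_toFinset_card _ hfin, nsmul_eq_mul, ← ENNReal.ofReal_natCast,
          ← ENNReal.ofReal_mul (Nat.cast_nonneg _), ← ENNReal.ofReal_pow (Real.exp_pos _).le,
          ← ENNReal.ofReal_mul (by positivity)]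
        apply ENNReal.ofReal_le_ofReal
        refine (mul_le_mul_of_nonneg_right hcard (Real.exp_pos _).le).trans (le_of_eq ?_)
        rw [← Real.exp_nat_mul, mul_assoc, mul_assoc, ← Real.exp_add, ← Real.exp_add]
        congr 2
        rw [hA]; ring
    refine ne_top_of_le_ne_top ?_ (ENNReal.tsum_le_tsum hk)
    rw [ENNReal.tsum_mul_left, ENNReal.tsum_geometric]
    refine ENNReal.mul_ne_top ENNReal.ofReal_ne_top ?_
    rw [ENNReal.inv_ne_top]
    have : ENNReal.ofReal (Real.exp (-1)) < 1 := by
      rw [ENNReal.ofReal_lt_one]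
      exact (Real.exp_lt_exp.mpr (by norm_num : (-1 : ℝ) < 0)).trans_eq Real.exp_zero
    exact (tsub_pos_of_lt this).ne'
  have hbound : ∀ g, p g * ENNReal.ofReal (-Real.log (p g).toReal) ≤
      ENNReal.ofReal A * (p g * ENNReal.ofReal (f g)) + ENNReal.ofReal (Real.exp (-(A * f g))) := by
    intro g
    set q := (p g).toReal with hq
    have hpq : p g = ENNReal.ofReal q := (ENNReal.ofReal_toReal (hpt g)).symm
    have hq0 : 0 ≤ q := ENNReal.toReal_nonneg
    rw [hpq, ← ENNReal.ofReal_mul hq0, ← ENNReal.ofReal_mul hq0, ← ENNReal.ofReal_mul hA0.le,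
      ← ENNReal.ofReal_add (mul_nonneg hA0.le (mul_nonneg hq0 (h0 g))) (Real.exp_pos _).le]
    apply ENNReal.ofReal_le_ofReal
    rcases hq0.eq_or_lt with h | h
    · rw [← h]; simp [Real.exp_nonneg]
    · have h1 := Real.log_le_sub_one_of_pos (x := Real.exp (-(A * f g)) / q) (by positivity)
      rw [Real.log_div (Real.exp_pos _).ne' h.ne', Real.log_exp] at h1
      have h2 := mul_le_mul_of_nonneg_left h1 h.le
      have h3 : q * (Real.exp (-(A * f g)) / q - 1) = Real.exp (-(A * f g)) - q := by
        field_simp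
      rw [h3] at h2
      nlinarith
  refine ne_top_of_le_ne_top ?_ (ENNReal.tsum_le_tsum hbound)
  rw [ENNReal.tsum_add, ENNReal.tsum_mul_left]
  exact ENNReal.add_ne_top.mpr ⟨ENNReal.mul_ne_top ENNReal.ofReal_ne_top hmom, hexp⟩

lemma entropy_lower (hp : IsProb p) (hP : IsRWMeasure p P)
    (hH : Integrable (fun ω : ℕ → G => -Real.log (p (ω 0)).toReal) P) (h : ℝ) (hh : HasEntropy p h)
    (ε : ℝ) (hε : 0 < ε) :
    ∀ᵐ ω ∂P, ∀ᶠ n : ℕ in atTop, (h - ε) * n ≤ -Real.log (piN p n (walk ω n)).toReal := by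
  have := hP.1
  have herg : Ergodic shiftS P := by simpa using rw_ergodic hp hP 1 le_rfl
  have hmp := rw_shift_mp hp hP
  set g : ℕ → (ℕ → G) → ℝ := fun n ω => -Real.log (piN p n (walk ω n)).toReal with hg
  have hgm : ∀ n, Measurable (g n) := fun n =>
    (measurable_of_countable (fun x : G => -Real.log (piN p n x).toReal)).comp (measurable_walk n)
  have hg0 : ∀ n ω, 0 ≤ g n ω := by
    intro n ω
    refine neg_nonneg.mpr (Real.log_nonpos ENNReal.toReal_nonneg ?_)
    have := ENNReal.toReal_mono ENNReal.one_ne_top (piN_le_one hp hP n (walk ω n))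
    simpa using this
  have hpos : ∀ᵐ ω ∂P, ∀ k n, piN p n (walk (shiftS^[k] ω) n) ≠ 0 := by
    rw [ae_all_iff]
    intro k
    exact (hmp.iterate k).quasiMeasurePreserving.ae (piN_pos_ae hp hP)
  have hsub : ∀ᵐ ω ∂P, ∀ n m, g (n + m) ω ≤ g n ω + g m (shiftS^[n] ω) := by
    filter_upwards [hpos] with ω hω n m
    have h1 := hω 0 n
    have h2 := hω n m
    simp only [Function.iterate_zero, id] at h1
    have h3 := piN_mul_le hp hP n m (walk ω n) (walk (shiftS^[n] ω) m)
    rw [← walk_add] at h3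
    have h4 := ENNReal.toReal_mono (piN_ne_top hp hP _ _) h3
    rw [ENNReal.toReal_mul] at h4
    have p1 := ENNReal.toReal_pos h1 (piN_ne_top hp hP _ _)
    have p2 := ENNReal.toReal_pos h2 (piN_ne_top hp hP _ _)
    have h5 := Real.log_le_log (mul_pos p1 p2) h4
    rw [Real.log_mul p1.ne' p2.ne'] at h5
    simp only [hg]
    linarith
  have hg00 : ∀ ω, g 0 ω = 0 := by
    intro ω; simp [hg, walk_zero, piN]
  have hg1 : Integrable (g 1) P := by
    refine hH.congr (Eventually.of_forall fun ω => ?_)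
    simp [hg, walk_one, piN_one hp hP]
  have hintg : ∀ n, Integrable (g n) P := by
    intro n
    induction n with
    | zero =>
      have : g 0 = fun _ => 0 := funext hg00
      rw [this]; exact integrable_const _
    | succ n ih =>
      refine Integrable.mono' (ih.add ((hmp.iterate n).integrable_comp_of_integrable hg1))
        (hgm _).aestronglyMeasurable ?_
      filter_upwards [hsub] with ω hω
      rw [Real.norm_eq_abs, abs_of_nonneg (hg0 _ _)]
      exact hω n 1
  refine kingman_lower herg g hgm hintg hg00 hsub h ?_ (h - ε) (by linarith)
  have hent : ∀ n, ∫ ω, g n ω ∂P = entropySeq p n := by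
    intro n
    have := (rw_map_walk hp hP n (fun x => -Real.log (piN p n x).toReal) (hintg n)).tsum_eq
    rw [entropySeq]
    simp only [hg]
    rw [← this]
    congr 1
    ext x
    rw [Real.negMulLog]; ring
  simp_rw [hent]
  exact hh

end Len

/-! ### The Radon-Nikodym cocycle along the walk -/

section Cocycle
variable {G : Type*} [Group G] [Countable G] [MeasurableSpace G] [DiscreteMeasurableSpace G]
  {p : G → ℝ≥0∞} {P : Measure (ℕ → G)}

lemma rw_ae_cons (hp : IsProb p) (hP : IsRWMeasure p P) {Q : (ℕ → G) → Prop} (hQ : ∀ᵐ ω ∂P, Q ω)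
    (g : G) (hg : p g ≠ 0) : ∀ᵐ ω ∂P, Q (consS g ω) := by
  rw [rw_decomp hp hP, Measure.ae_sum_iff] at hQ
  have h1 := hQ g
  have h1 : ∀ᵐ ω ∂(P.map (consS g)), Q ω := by
    rw [ae_iff] at h1 ⊢
    simpa [hg] using h1
  exact ae_of_ae_map (measurable_consS g).aemeasurable h1

variable {B : Type*} [MeasurableSpace B]

/-- density of the translate of `ν` by the map `a g` -/
def rr (ν : Measure B) (a : G → B → B) (g : G) : B → ℝ≥0∞ := (ν.map (a g)).rnDeriv ν

lemma measurable_rr (ν : Measure B) (a : G → B → B) (g : G) : Measurable (rr ν a g) :=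
  Measure.measurable_rnDeriv _ _

/-- inverse of the cocycle -/
def QQ (ν : Measure B) (a : G → B → B) (b : (ℕ → G) → B) : ℕ → (ℕ → G) → ℝ≥0∞
  | 0 => fun _ => 1
  | n + 1 => fun ω => (rr ν a (ω 0) (b ω))⁻¹ * QQ ν a b n (shiftS ω)

lemma measurable_first_comp {C : Type*} [MeasurableSpace C] (b : (ℕ → G) → B) (hb : Measurable b) (Φ : G → B → C)
    (hΦ : ∀ g, Measurable (Φ g)) : Measurable (fun ω : ℕ → G => Φ (ω 0) (b ω)) := by
  have h1 : Measurable (fun z : G × B => Φ z.1 z.2) := measurable_from_prod_countable_right hΦ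
  exact h1.comp ((measurable_pi_apply 0).prodMk hb)

lemma measurable_QQ (ν : Measure B) (a : G → B → B) (b : (ℕ → G) → B) (hb : Measurable b) (n : ℕ) :
    Measurable (QQ ν a b n) := by
  induction n with
  | zero => exact measurable_const
  | succ n ih =>
    exact (measurable_first_comp b hb (fun g η => (rr ν a g η)⁻¹) (fun g => (measurable_rr ν a g).inv)).mul
      (ih.comp measurable_shiftS)

variable {a : G → B → B} {b : (ℕ → G) → B}

lemma bd_lintegral (hp : IsProb p) (hP : IsRWMeasure p P) (ha : ∀ g, Measurable (a g)) (hb : Measurable b)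
    (heq : ∀ᵐ ω ∂P, b ω = a (ω 0) (b (shiftS ω))) (Φ : G → B → ℝ≥0∞) (hΦ : ∀ g, Measurable (Φ g)) :
    ∫⁻ ω, Φ (ω 0) (b ω) ∂P = ∑' g, p g * ∫⁻ η, Φ g η ∂((P.map b).map (a g)) := by
  rw [rw_lintegral hp hP _ (measurable_first_comp b hb Φ hΦ)]
  congr 1
  ext g
  by_cases hg : p g = 0
  · simp [hg]
  congr 1
  rw [lintegral_map (hΦ g) (ha g), lintegral_map (f := fun η => Φ g (a g η)) ((hΦ g).comp (ha g)) hb]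
  apply lintegral_congr_ae
  filter_upwards [rw_ae_cons hp hP heq g hg] with ω hω
  rw [hω, consS_zero, shiftS_consS]

lemma bd_le (hp : IsProb p) (hP : IsRWMeasure p P) (ha : ∀ g, Measurable (a g)) (hb : Measurable b)
    (heq : ∀ᵐ ω ∂P, b ω = a (ω 0) (b (shiftS ω))) (g : G) :
    p g • (P.map b).map (a g) ≤ P.map b := by
  rw [Measure.le_iff]
  intro A hA
  have h := bd_lintegral hp hP ha hb heq (fun _ => A.indicator 1) (fun _ => measurable_one.indicator hA)
  have h2 : ∫⁻ ω, A.indicator (1 : B → ℝ≥0∞) (b ω) ∂P = P.map b A := by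
    rw [← lintegral_map (measurable_one.indicator hA) hb, lintegral_indicator_one hA]
  rw [← h2, h]
  simp only [lintegral_indicator_one hA]
  exact ENNReal.le_tsum (f := fun g => p g * ((P.map b).map (a g)) A) g

lemma bd_ac (hp : IsProb p) (hP : IsRWMeasure p P) (ha : ∀ g, Measurable (a g)) (hb : Measurable b)
    (heq : ∀ᵐ ω ∂P, b ω = a (ω 0) (b (shiftS ω))) (g : G) (hg : p g ≠ 0) :
    (P.map b).map (a g) ≪ P.map b := by
  have h := bd_le hp hP ha hb heq g
  refine Measure.AbsolutelyContinuous.mk fun s hs h0 => ?_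
  have := h s
  rw [h0] at this
  simpa [hg] using this

lemma bd_dens (hp : IsProb p) (hP : IsRWMeasure p P) (ha : ∀ g, Measurable (a g)) (hb : Measurable b)
    (heq : ∀ᵐ ω ∂P, b ω = a (ω 0) (b (shiftS ω))) (g : G) (hg : p g ≠ 0) :
    (P.map b).map (a g) = (P.map b).withDensity (rr (P.map b) a g) := by
  have := hP.1
  have := Measure.isProbabilityMeasure_map hb.aemeasurable (μ := P)
  have := Measure.isProbabilityMeasure_map (ha g).aemeasurable (μ := P.map b)
  exact (Measure.withDensity_rnDeriv_eq _ _ (bd_ac hp hP ha hb heq g hg)).symm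

lemma bd_lint (hp : IsProb p) (hP : IsRWMeasure p P) (ha : ∀ g, Measurable (a g)) (hb : Measurable b)
    (heq : ∀ᵐ ω ∂P, b ω = a (ω 0) (b (shiftS ω))) (g : G) (hg : p g ≠ 0) (φ : B → ℝ≥0∞) (hφ : Measurable φ) :
    ∫⁻ η, φ η ∂((P.map b).map (a g)) = ∫⁻ η, rr (P.map b) a g η * φ η ∂(P.map b) := by
  rw [bd_dens hp hP ha hb heq g hg, lintegral_withDensity_eq_lintegral_mul _ (measurable_rr _ _ _) hφ]
  rfl

lemma QQ_key (hp : IsProb p) (hP : IsRWMeasure p P) (ha : ∀ g, Measurable (a g)) (hb : Measurable b)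
    (heq : ∀ᵐ ω ∂P, b ω = a (ω 0) (b (shiftS ω))) (n : ℕ) :
    ∀ (x : G) (ψ : B → ℝ≥0∞), Measurable ψ →
    ∫⁻ ω, {ω | walk ω n = x}.indicator (fun ω => ψ (b ω) * QQ (P.map b) a b n ω) ω ∂P ≤
      piN p n x * ∫⁻ η, ψ η ∂(P.map b) := by
  have := hP.1
  induction n with
  | zero =>
    intro x ψ hψ
    by_cases hx : x = 1
    · subst hx
      simp only [walk_zero, piN, QQ]
      simp [lintegral_map hψ hb]
    · have : ∀ ω : ℕ → G, {ω : ℕ → G | walk ω 0 = x}.indicator (fun ω => ψ (b ω) * QQ (P.map b) a b 0 ω) ω = 0 := by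
        intro ω
        apply indicator_of_notMem
        simp [walk_zero, Ne.symm hx]
      simp [this]
  | succ n ih =>
    intro x ψ hψ
    have hm : Measurable ({ω | walk ω (n+1) = x}.indicator (fun ω => ψ (b ω) * QQ (P.map b) a b (n+1) ω)) :=
      ((hψ.comp hb).mul (measurable_QQ _ _ _ hb _)).indicator (measurableSet_walk (n+1) x)
    rw [rw_lintegral hp hP _ hm, piN_first hp hP, ← ENNReal.tsum_mul_right]
    refine ENNReal.tsum_le_tsum fun g => ?_
    by_cases hg : p g = 0
    · simp [hg]
    rw [mul_assoc]
    gcongr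
    have h1 : ∫⁻ ω, {ω | walk ω (n+1) = x}.indicator (fun ω => ψ (b ω) * QQ (P.map b) a b (n+1) ω) (consS g ω) ∂P
      = ∫⁻ ω, {ω | walk ω n = g⁻¹ * x}.indicator (fun ω => (fun η => ψ (a g η) * (rr (P.map b) a g (a g η))⁻¹) (b ω)
          * QQ (P.map b) a b n ω) ω ∂P := by
      apply lintegral_congr_ae
      filter_upwards [rw_ae_cons hp hP heq g hg] with ω hω
      rw [consS_zero, shiftS_consS] at hω
      by_cases hw : walk ω n = g⁻¹ * x
      · rw [indicator_of_mem (show consS g ω ∈ _ from by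
            show walk (consS g ω) (n+1) = x
            rw [walk_consS, hw]; group), indicator_of_mem (show ω ∈ _ from hw)]
        simp only [QQ, consS_zero, shiftS_consS, hω, mul_assoc]
      · rw [indicator_of_notMem, indicator_of_notMem]
        · exact hw
        · intro h
          have h : walk (consS g ω) (n+1) = x := h
          rw [walk_consS] at h
          exact hw (by rw [← h]; group)
    rw [h1]
    have hr := measurable_rr (P.map b) a g
    refine (ih _ (fun η => ψ (a g η) * (rr (P.map b) a g (a g η))⁻¹) ((hψ.comp (ha g)).mul (hr.comp (ha g)).inv)).trans ?_
    refine mul_le_mul_right ?_ _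
    have h2 := bd_lint hp hP ha hb heq g hg (fun η => ψ η * (rr (P.map b) a g η)⁻¹) (hψ.mul hr.inv)
    rw [lintegral_map (f := fun η => ψ η * (rr (P.map b) a g η)⁻¹) (hψ.mul hr.inv) (ha g)] at h2
    rw [h2]
    apply lintegral_mono
    intro η
    show rr (P.map b) a g η * (ψ η * (rr (P.map b) a g η)⁻¹) ≤ ψ η
    calc _ = ψ η * (rr (P.map b) a g η * (rr (P.map b) a g η)⁻¹) := by ring
      _ ≤ ψ η * 1 := by gcongr; exact ENNReal.mul_inv_le_one _
      _ = _ := mul_one _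

/-- The bound used later. -/
lemma QQ_bound (hp : IsProb p) (hP : IsRWMeasure p P) (ha : ∀ g, Measurable (a g)) (hb : Measurable b)
    (heq : ∀ᵐ ω ∂P, b ω = a (ω 0) (b (shiftS ω))) (n : ℕ) (x : G) (E : Set (ℕ → G)) (hE : MeasurableSet E)
    (hEx : ∀ ω ∈ E, walk ω n = x) (K : ℝ≥0∞) (hK0 : K ≠ 0) (hKt : K ≠ ∞)
    (hEK : ∀ ω ∈ E, K⁻¹ ≤ QQ (P.map b) a b n ω) (A : Set B) (hA : MeasurableSet A) :
    P (E ∩ b ⁻¹' A) ≤ K * piN p n x * P.map b A := by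
  have h := QQ_key hp hP ha hb heq n x (A.indicator 1) (measurable_one.indicator hA)
  rw [lintegral_indicator_one hA] at h
  have h2 : K⁻¹ * P (E ∩ b ⁻¹' A) ≤ piN p n x * P.map b A := by
    refine le_trans ?_ h
    rw [← lintegral_indicator_const (hE.inter (hb hA))]
    apply lintegral_mono
    intro ω
    by_cases hω : ω ∈ E ∩ b ⁻¹' A
    · have h3 : b ω ∈ A := hω.2
      rw [indicator_of_mem hω]
      show K⁻¹ ≤ _
      rw [indicator_of_mem (show ω ∈ {ω | walk ω n = x} from hEx ω hω.1), indicator_of_mem h3]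
      simpa using hEK ω hω.1
    · rw [indicator_of_notMem hω]; exact zero_le
  calc P (E ∩ b ⁻¹' A) = K * (K⁻¹ * P (E ∩ b ⁻¹' A)) := by
        rw [← mul_assoc, ENNReal.mul_inv_cancel hK0 hKt, one_mul]
    _ ≤ K * (piN p n x * P.map b A) := by gcongr
    _ = _ := by ring

/-- log of the cocycle generator -/
def lf (ν : Measure B) (a : G → B → B) (b : (ℕ → G) → B) (ω : ℕ → G) : ℝ := Real.log (rr ν a (ω 0) (b ω)).toReal

lemma measurable_lf (ν : Measure B) (hb : Measurable b) : Measurable (lf ν a b) :=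
  measurable_first_comp b hb (fun g η => Real.log (rr ν a g η).toReal)
    (fun g => Real.measurable_log.comp (measurable_rr ν a g).ennreal_toReal)

lemma rr_ae (hp : IsProb p) (hP : IsRWMeasure p P) (ha : ∀ g, Measurable (a g)) (hb : Measurable b)
    (heq : ∀ᵐ ω ∂P, b ω = a (ω 0) (b (shiftS ω))) :
    ∀ᵐ ω ∂P, p (ω 0) ≠ 0 ∧ rr (P.map b) a (ω 0) (b ω) ≠ 0 ∧ p (ω 0) * rr (P.map b) a (ω 0) (b ω) ≤ 1 := by
  have := hP.1
  have := Measure.isProbabilityMeasure_map hb.aemeasurable (μ := P)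
  have hm : ∀ g, MeasurableSet {η | p g ≠ 0 ∧ rr (P.map b) a g η ≠ 0 ∧ p g * rr (P.map b) a g η ≤ 1}ᶜ := by
    intro g
    apply MeasurableSet.compl
    have hr := measurable_rr (P.map b) a g
    exact (MeasurableSet.const _).inter ((hr (measurableSet_singleton 0).compl).inter
      (measurableSet_le (hr.const_mul _) measurable_const))
  have h := bd_lintegral hp hP ha hb heq
    (fun g => {η | p g ≠ 0 ∧ rr (P.map b) a g η ≠ 0 ∧ p g * rr (P.map b) a g η ≤ 1}ᶜ.indicator 1)
    (fun g => measurable_one.indicator (hm g))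
  have h0 : ∀ g, p g * ((P.map b).map (a g)) {η | p g ≠ 0 ∧ rr (P.map b) a g η ≠ 0 ∧ p g * rr (P.map b) a g η ≤ 1}ᶜ = 0 := by
    intro g
    by_cases hg : p g = 0
    · simp [hg]
    have hA : ∀ᵐ η ∂((P.map b).map (a g)), rr (P.map b) a g η ≠ 0 := by
      rw [bd_dens hp hP ha hb heq g hg, ae_withDensity_iff (measurable_rr _ _ _)]
      exact Eventually.of_forall fun η h => h
    have hB : ∀ᵐ η ∂((P.map b).map (a g)), p g * rr (P.map b) a g η ≤ 1 := by
      apply (bd_ac hp hP ha hb heq g hg).ae_le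
      have hr := measurable_rr (P.map b) a g
      have : (fun η => p g * rr (P.map b) a g η) ≤ᵐ[P.map b] fun _ => 1 := by
        refine ae_le_of_forall_setLIntegral_le_of_sigmaFinite (hr.const_mul _) fun s hs _ => ?_
        rw [lintegral_const_mul _ hr, ← withDensity_apply _ hs, ← bd_dens hp hP ha hb heq g hg]
        simpa using bd_le hp hP ha hb heq g s
      exact this
    have : ∀ᵐ η ∂((P.map b).map (a g)), p g ≠ 0 ∧ rr (P.map b) a g η ≠ 0 ∧ p g * rr (P.map b) a g η ≤ 1 := by
      filter_upwards [hA, hB] with η h1 h2 using ⟨hg, h1, h2⟩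
    rw [ae_iff] at this
    rw [show {η | p g ≠ 0 ∧ rr (P.map b) a g η ≠ 0 ∧ p g * rr (P.map b) a g η ≤ 1}ᶜ =
      {η | ¬(p g ≠ 0 ∧ rr (P.map b) a g η ≠ 0 ∧ p g * rr (P.map b) a g η ≤ 1)} from rfl, this, mul_zero]
  simp only [lintegral_indicator_one (hm _), h0, tsum_zero] at h
  rw [lintegral_eq_zero_iff (measurable_first_comp b hb _ (fun g => measurable_one.indicator (hm g)))] at h
  filter_upwards [h] with ω hω
  by_contra hc
  simp only [Pi.zero_apply] at hω
  rw [indicator_of_mem (show b ω ∈ _ from hc)] at hω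
  simp at hω

lemma lf_integrable (hp : IsProb p) (hP : IsRWMeasure p P) (ha : ∀ g, Measurable (a g)) (hb : Measurable b)
    (heq : ∀ᵐ ω ∂P, b ω = a (ω 0) (b (shiftS ω)))
    (hH : Integrable (fun ω : ℕ → G => -Real.log (p (ω 0)).toReal) P) :
    Integrable (lf (P.map b) a b) P := by
  have := hP.1
  have := Measure.isProbabilityMeasure_map hb.aemeasurable (μ := P)
  have hm := measurable_lf (P.map b) (a := a) hb
  have hneg : Integrable (fun ω => max (-lf (P.map b) a b ω) 0) P := by
    refine ⟨(hm.neg.max measurable_const).aestronglyMeasurable, ?_⟩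
    rw [HasFiniteIntegral]
    have h1 : ∀ ω, ‖max (-lf (P.map b) a b ω) 0‖ₑ = ENNReal.ofReal (-lf (P.map b) a b ω) := by
      intro ω
      rw [Real.enorm_eq_ofReal (le_max_right _ _), ENNReal.ofReal_max, ENNReal.ofReal_zero]
      simp
    simp only [h1]
    have h2 := bd_lintegral hp hP ha hb heq (fun g η => ENNReal.ofReal (-Real.log (rr (P.map b) a g η).toReal))
      (fun g => (Real.measurable_log.comp (measurable_rr _ a g).ennreal_toReal).neg.ennreal_ofReal)
    refine lt_of_le_of_lt (le_of_eq h2) ?_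
    have h3 : ∑' g, p g * ∫⁻ η, ENNReal.ofReal (-Real.log (rr (P.map b) a g η).toReal) ∂((P.map b).map (a g)) ≤
        ∑' g, p g * 1 := by
      refine ENNReal.tsum_le_tsum fun g => ?_
      by_cases hg : p g = 0
      · simp [hg]
      gcongr
      rw [bd_lint hp hP ha hb heq g hg (fun η => ENNReal.ofReal (-Real.log (rr (P.map b) a g η).toReal)) ((Real.measurable_log.comp (measurable_rr _ a g).ennreal_toReal).neg.ennreal_ofReal)]
      calc _ ≤ ∫⁻ η, 1 ∂(P.map b) := by
            apply lintegral_mono_ae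
            have hlt : ∀ᵐ η ∂(P.map b), rr (P.map b) a g η < ∞ := by
              have := Measure.isProbabilityMeasure_map (ha g).aemeasurable (μ := P.map b)
              exact Measure.rnDeriv_lt_top _ _
            filter_upwards [hlt] with η hη
            set r := (rr (P.map b) a g η).toReal with hr
            have hr0 : 0 ≤ r := ENNReal.toReal_nonneg
            rw [← ENNReal.ofReal_toReal hη.ne, ← ENNReal.ofReal_mul hr0, ← ENNReal.ofReal_one]
            apply ENNReal.ofReal_le_ofReal
            have := Real.one_sub_inv_le_log_of_pos (x := r)
            rcases hr0.eq_or_lt with h | h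
            · rw [← h]; simp
            · have h5 := this h
              have h6 := mul_le_mul_of_nonneg_left h5 hr0
              have : r * (1 - r⁻¹) = r - 1 := by field_simp
              rw [this] at h6
              linarith
        _ = 1 := by simp
    refine lt_of_le_of_lt h3 ?_
    simp only [mul_one]
    rw [hp]; exact ENNReal.one_lt_top
  refine (hH.abs.add hneg).mono' hm.aestronglyMeasurable ?_
  filter_upwards [rr_ae hp hP ha hb heq] with ω ⟨h0, h1, h2⟩
  have hpt : p (ω 0) ≠ ∞ := by
    rw [← piN_one hp hP]; exact piN_ne_top hp hP _ _
  have h3 : (p (ω 0)).toReal * (rr (P.map b) a (ω 0) (b ω)).toReal ≤ 1 := by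
    rw [← ENNReal.toReal_mul]; exact ENNReal.toReal_le_of_le_ofReal zero_le_one (by simpa using h2)
  have hrt : rr (P.map b) a (ω 0) (b ω) ≠ ∞ := by
    intro h
    rw [h, ENNReal.mul_top h0] at h2
    simp at h2
  have h4 : 0 < (p (ω 0)).toReal := ENNReal.toReal_pos h0 hpt
  have h5 : 0 < (rr (P.map b) a (ω 0) (b ω)).toReal := ENNReal.toReal_pos h1 hrt
  have h6 := Real.log_nonpos (by positivity) h3
  rw [Real.log_mul h4.ne' h5.ne'] at h6
  rw [Pi.add_apply, Real.norm_eq_abs]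
  have h7 : lf (P.map b) a b ω = Real.log (rr (P.map b) a (ω 0) (b ω)).toReal := rfl
  have h8 := le_abs_self (-Real.log (p (ω 0)).toReal)
  have h9 := abs_nonneg (-Real.log (p (ω 0)).toReal)
  have h10 := le_max_left (-lf (P.map b) a b ω) 0
  have h11 := le_max_right (-lf (P.map b) a b ω) 0
  show |_| ≤ |-Real.log (p (ω 0)).toReal| + max (-lf (P.map b) a b ω) 0
  rw [abs_le]
  constructor <;> linarith

lemma lf_hasSum (hp : IsProb p) (hP : IsRWMeasure p P) (ha : ∀ g, Measurable (a g)) (hb : Measurable b)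
    (heq : ∀ᵐ ω ∂P, b ω = a (ω 0) (b (shiftS ω)))
    (hH : Integrable (fun ω : ℕ → G => -Real.log (p (ω 0)).toReal) P) :
    HasSum (fun g => (p g).toReal * ∫ η, Real.log (rr (P.map b) a g η).toReal ∂((P.map b).map (a g)))
      (∫ ω, lf (P.map b) a b ω ∂P) := by
  have hi := lf_integrable hp hP ha hb heq hH
  have hm := measurable_lf (P.map b) (a := a) hb
  have hd := rw_decomp hp hP
  have hi' : Integrable (lf (P.map b) a b) (Measure.sum (fun g => p g • P.map (consS g))) := by rw [← hd]; exact hi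
  have h := hasSum_integral_measure hi'
  rw [← hd] at h
  refine (congrArg (fun f => HasSum f _) (funext fun g => ?_)).mpr h
  rw [integral_smul_measure, smul_eq_mul]
  by_cases hg : p g = 0
  · simp [hg]
  congr 1
  have hmg : Measurable (fun η => Real.log (rr (P.map b) a g η).toReal) :=
    Real.measurable_log.comp (measurable_rr _ a g).ennreal_toReal
  rw [integral_map (ha g).aemeasurable hmg.aestronglyMeasurable,
    integral_map (f := fun η => Real.log (rr (P.map b) a g (a g η)).toReal) hb.aemeasurable (hmg.comp (ha g)).aestronglyMeasurable,
    integral_map (measurable_consS g).aemeasurable hm.aestronglyMeasurable]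
  apply integral_congr_ae
  filter_upwards [rw_ae_cons hp hP heq g hg] with ω hω
  rw [consS_zero, shiftS_consS] at hω
  simp only [lf, consS_zero, hω]

lemma QQ_lower (hp : IsProb p) (hP : IsRWMeasure p P) (ha : ∀ g, Measurable (a g)) (hb : Measurable b)
    (heq : ∀ᵐ ω ∂P, b ω = a (ω 0) (b (shiftS ω)))
    (hH : Integrable (fun ω : ℕ → G => -Real.log (p (ω 0)).toReal) P) (c : ℝ)
    (hc : ∫ ω, lf (P.map b) a b ω ∂P < c) :
    ∀ᵐ ω ∂P, ∀ᶠ n : ℕ in atTop, (ENNReal.ofReal (Real.exp (c * n)))⁻¹ ≤ QQ (P.map b) a b n ω := by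
  have := hP.1
  have hE : Ergodic shiftS P := by simpa using rw_ergodic hp hP 1 le_rfl
  have hbk := birkhoff_upper hE _ (measurable_lf (P.map b) hb) (lf_integrable hp hP ha hb heq hH) c hc
  have hpos : ∀ᵐ ω ∂P, ∀ k, (fun ω => p (ω 0) ≠ 0 ∧ rr (P.map b) a (ω 0) (b ω) ≠ 0 ∧ p (ω 0) * rr (P.map b) a (ω 0) (b ω) ≤ 1)
      (shiftS^[k] ω) := by
    rw [ae_all_iff]
    intro k
    exact ((rw_shift_mp hp hP).iterate k).quasiMeasurePreserving.ae (rr_ae hp hP ha hb heq)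
  have key : ∀ n (ω : ℕ → G), (∀ k, (fun ω => p (ω 0) ≠ 0 ∧ rr (P.map b) a (ω 0) (b ω) ≠ 0 ∧ p (ω 0) * rr (P.map b) a (ω 0) (b ω) ≤ 1)
      (shiftS^[k] ω)) → QQ (P.map b) a b n ω =
        (ENNReal.ofReal (Real.exp (∑ k ∈ Finset.range n, lf (P.map b) a b (shiftS^[k] ω))))⁻¹ := by
    intro n
    induction n with
    | zero => intro ω _; simp [QQ]
    | succ n ih =>
      intro ω h
      simp only [QQ]
      rw [ih (shiftS ω) (fun k => by rw [← Function.iterate_succ_apply]; exact h (k + 1)), Finset.sum_range_succ', Real.exp_add,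
        ENNReal.ofReal_mul (Real.exp_pos _).le, ENNReal.mul_inv (by simp [Real.exp_pos]) (by simp), mul_comm]
      congr 1
      obtain ⟨h0, h1, h2⟩ := h 0
      simp only [Function.iterate_zero, id] at h0 h1 h2 ⊢
      have hrt : rr (P.map b) a (ω 0) (b ω) ≠ ∞ := by
        intro h
        rw [h, ENNReal.mul_top h0] at h2
        simp at h2
      rw [lf, Real.exp_log (ENNReal.toReal_pos h1 hrt), ENNReal.ofReal_toReal hrt]
  filter_upwards [hbk, hpos] with ω h1 h2
  filter_upwards [h1] with n hn
  rw [key n ω h2, ENNReal.inv_le_inv]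
  exact ENNReal.ofReal_le_ofReal (Real.exp_le_exp.mpr hn)

end Cocycle

/-! ### Geometry of the Gromov boundary -/

section Geom
variable {X : Type*} [MetricSpace X] {o : X} {δ : ℝ}

lemma gp_nonneg (o x y : X) : 0 ≤ gp o x y := by
  simp only [gp]; linarith [dist_triangle x o y]

lemma gp_comm (o x y : X) : gp o x y = gp o y x := by
  simp only [gp]; rw [dist_comm x o, dist_comm o y, dist_comm x y]; ring

lemma gp_ge (o x y : X) : dist o x - dist x y ≤ gp o x y := by
  simp only [gp]; rw [dist_comm x o]
  linarith [dist_triangle o y x, dist_comm x y]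

lemma gp_tendsto_iff (f : ℕ × ℕ → ℝ) : Tendsto f atTop atTop ↔
    ∀ K : ℝ, ∀ᶠ q : ℕ × ℕ in atTop, K ≤ f q := tendsto_atTop

lemma ev_prod {p : ℕ × ℕ → Prop} : (∀ᶠ q : ℕ × ℕ in atTop, p q) ↔ ∃ N : ℕ, ∀ m ≥ N, ∀ m' ≥ N, p (m, m') := by
  rw [eventually_atTop]
  constructor
  · rintro ⟨⟨a, b⟩, h⟩
    exact ⟨max a b, fun m hm m' hm' => h (m, m') ⟨le_trans (le_max_left _ _) hm, le_trans (le_max_right _ _) hm'⟩⟩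
  · rintro ⟨N, h⟩
    exact ⟨(N, N), fun q hq => h q.1 hq.1 q.2 hq.2⟩

lemma bndRel_symm {u v : DivSeq X o} (h : bndRel o u v) : bndRel o v u := by
  rw [bndRel, gp_tendsto_iff] at *
  intro K
  obtain ⟨N, hN⟩ := ev_prod.mp (h K)
  exact ev_prod.mpr ⟨N, fun m hm m' hm' => by
    have := hN m' hm' m hm
    show K ≤ gp o (v.1 m) (u.1 m')
    rw [gp_comm]; exact this⟩

lemma ev_trans (hδ : IsHyperbolicWith X δ) {u v w : ℕ → X} {s t : ℝ}
    (h1 : ∀ᶠ q : ℕ × ℕ in atTop, s ≤ gp o (u q.1) (v q.2)) (h2 : ∀ᶠ q : ℕ × ℕ in atTop, t ≤ gp o (v q.1) (w q.2)) :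
    ∀ᶠ q : ℕ × ℕ in atTop, min s t - δ ≤ gp o (u q.1) (w q.2) := by
  obtain ⟨N, hN⟩ := ev_prod.mp h1
  obtain ⟨M, hM⟩ := ev_prod.mp h2
  refine ev_prod.mpr ⟨max N M, fun m hm m' hm' => ?_⟩
  have a1 := hN m (le_trans (le_max_left _ _) hm) (max N M) (le_max_left _ _)
  have a2 := hM (max N M) (le_max_right _ _) m' (le_trans (le_max_right _ _) hm')
  have := hδ (u m) (w m') (v (max N M)) o
  exact (sub_le_sub_right (min_le_min a1 a2) δ).trans this

lemma bndRel_trans (hδ : IsHyperbolicWith X δ) {u v w : DivSeq X o} (h : bndRel o u v) (h' : bndRel o v w) :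
    bndRel o u w := by
  rw [bndRel, gp_tendsto_iff] at *
  intro K
  have := ev_trans hδ (h (K + δ)) (h' (K + δ))
  simpa using this

lemma mkB_eq (hδ : IsHyperbolicWith X δ) {u v : DivSeq X o} : mkB o u = mkB o v ↔ bndRel o u v := by
  constructor
  · intro h
    have h2 := Quot.eqvGen_exact h
    induction h2 with
    | rel x y h' => exact h'
    | refl x => exact x.2
    | symm x y _ ih => exact bndRel_symm (ih (by symm; exact h))
    | trans x y z h1 h2 ih1 ih2 =>
      exact bndRel_trans hδ (ih1 (Quot.eqvGen_sound h1)) (ih2 (Quot.eqvGen_sound h2))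
  · intro h; exact Quot.sound h

lemma liminf_gp_nonneg (u v : ℕ → X) :
    0 ≤ Filter.liminf (fun pr : ℕ × ℕ => gp o (u pr.1) (v pr.2)) atTop := by
  rw [Filter.liminf_eq]
  by_cases h : BddAbove {a : ℝ | ∀ᶠ pr : ℕ × ℕ in atTop, a ≤ gp o (u pr.1) (v pr.2)}
  · exact le_csSup h (Eventually.of_forall fun pr => gp_nonneg _ _ _)
  · rw [Real.sSup_of_not_bddAbove h]

lemma qB_lt_gp (hδ : IsHyperbolicWith X δ) {u v : DivSeq X o} {t : ℝ}
    (h : qB o (mkB o u) (mkB o v) < Real.exp (-t)) :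
    ∀ᶠ q : ℕ × ℕ in atTop, t ≤ gp o (u.1 q.1) (v.1 q.2) := by
  by_cases he : mkB o u = mkB o v
  · exact (gp_tendsto_iff _).mp ((mkB_eq hδ).mp he) t
  · rw [qB, if_neg he, Real.exp_lt_exp, neg_lt_neg_iff] at h
    have h1 : gpB o (mkB o u) (mkB o v) ≤ Filter.liminf (fun pr : ℕ × ℕ => gp o (u.1 pr.1) (v.1 pr.2)) atTop := by
      apply csInf_le
      · refine ⟨0, ?_⟩
        rintro s ⟨u', v', _, _, rfl⟩
        exact liminf_gp_nonneg _ _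
      · exact ⟨u, v, rfl, rfl, rfl⟩
    have h2 := h.trans_le h1
    rw [Filter.liminf_eq] at h2
    obtain ⟨a, ha, hta⟩ := exists_lt_of_lt_csSup (show Set.Nonempty _ from
      ⟨(0 : ℝ), show ∀ᶠ pr : ℕ × ℕ in atTop, (0 : ℝ) ≤ gp o (u.1 pr.1) (v.1 pr.2) from
        Eventually.of_forall fun pr => gp_nonneg _ _ _⟩) h2
    filter_upwards [ha] with q hq
    exact hta.le.trans hq

lemma gp_qB_lt (hδ : IsHyperbolicWith X δ) (hδ0 : 0 ≤ δ) {u v : DivSeq X o} {s : ℝ}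
    (h : ∀ᶠ q : ℕ × ℕ in atTop, s ≤ gp o (u.1 q.1) (v.1 q.2)) :
    qB o (mkB o u) (mkB o v) < Real.exp (-(s - 2 * δ - 1)) := by
  by_cases he : mkB o u = mkB o v
  · rw [qB, if_pos he]; exact Real.exp_pos _
  · rw [qB, if_neg he, Real.exp_lt_exp, neg_lt_neg_iff]
    have : s - 2 * δ ≤ gpB o (mkB o u) (mkB o v) := by
      apply le_csInf
      · exact ⟨_, u, v, rfl, rfl, rfl⟩
      · rintro t ⟨u', v', hu, hv, rfl⟩
        have h1 : bndRel o u' u := (mkB_eq hδ).mp hu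
        have h2 : bndRel o v v' := bndRel_symm ((mkB_eq hδ).mp hv)
        have h3 := (gp_tendsto_iff _).mp h1 s
        have h4 := (gp_tendsto_iff _).mp h2 s
        have h5 := ev_trans hδ h3 (ev_trans hδ h h4)
        rw [Filter.liminf_eq]
        apply le_csSup
        · by_contra hc
          apply he
          rw [← hu, ← hv, mkB_eq hδ, bndRel, gp_tendsto_iff]
          intro K
          rw [not_bddAbove_iff] at hc
          obtain ⟨a, ha, hKa⟩ := hc K
          filter_upwards [ha] with q hq
          exact hKa.le.trans hq
        · filter_upwards [h5] with q hq
          refine le_trans ?_ hq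
          rw [min_self, min_eq_right (by linarith)]
          linarith
    linarith

/-- `x` is at Gromov product at least `t` with the tail of `u` -/
def Trk (o : X) (u : ℕ → X) (x : X) (t : ℝ) : Prop := ∀ᶠ m in atTop, t ≤ gp o x (u m)

lemma trk_qB (hδ : IsHyperbolicWith X δ) (hδ0 : 0 ≤ δ) {u v : DivSeq X o} {x : X} {t : ℝ}
    (h1 : Trk o u.1 x t) (h2 : Trk o v.1 x t) :
    qB o (mkB o u) (mkB o v) < Real.exp (-(t - 3 * δ - 1)) := by
  have : ∀ᶠ q : ℕ × ℕ in atTop, t - δ ≤ gp o (u.1 q.1) (v.1 q.2) := by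
    obtain ⟨N, hN⟩ := eventually_atTop.mp h1
    obtain ⟨M, hM⟩ := eventually_atTop.mp h2
    refine ev_prod.mpr ⟨max N M, fun m hm m' hm' => ?_⟩
    have a1 := hN m (le_trans (le_max_left _ _) hm)
    have a2 := hM m' (le_trans (le_max_right _ _) hm')
    rw [gp_comm] at a1
    exact (sub_le_sub_right (le_min a1 a2) δ).trans (hδ _ _ x o)
  have := gp_qB_lt hδ hδ0 this
  convert this using 3; ring

lemma trk_move (hδ : IsHyperbolicWith X δ) {u v : ℕ → X} {x : X} {t s : ℝ}
    (h1 : Trk o u x t) (h : ∀ᶠ q : ℕ × ℕ in atTop, s ≤ gp o (u q.1) (v q.2)) :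
    Trk o v x (min t s - δ) := by
  obtain ⟨N, hN⟩ := eventually_atTop.mp h1
  obtain ⟨M, hM⟩ := ev_prod.mp h
  refine eventually_atTop.mpr ⟨M, fun m hm => ?_⟩
  have a1 := hN (max N M) (le_max_left _ _)
  have a2 := hM (max N M) (le_max_right _ _) m hm
  exact (sub_le_sub_right (min_le_min a1 a2) δ).trans (hδ _ _ _ o)

lemma trk_mono {u : ℕ → X} {x : X} {t s : ℝ} (h : Trk o u x t) (hs : s ≤ t) : Trk o u x s := by
  filter_upwards [h] with m hm using hs.trans hm

lemma trk_left (hδ : IsHyperbolicWith X δ) {u v : DivSeq X o} {x : X} {t s : ℝ}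
    (h1 : Trk o u.1 x t) (h : qB o (mkB o u) (mkB o v) < Real.exp (-s)) (hs : s ≤ t) :
    Trk o v.1 x (s - δ) := by
  have := trk_move hδ h1 (qB_lt_gp hδ h)
  rwa [min_eq_right hs] at this

lemma trk_right (hδ : IsHyperbolicWith X δ) {u v : DivSeq X o} {x : X} {t s : ℝ}
    (h1 : Trk o v.1 x t) (h : qB o (mkB o u) (mkB o v) < Real.exp (-s)) :
    Trk o u.1 x (min t s - δ) := by
  have h2 := qB_lt_gp hδ h
  refine trk_move hδ h1 ?_
  obtain ⟨N, hN⟩ := ev_prod.mp h2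
  exact ev_prod.mpr ⟨N, fun m hm m' hm' => by
    have := hN m' hm' m hm
    show s ≤ gp o (v.1 m) (u.1 m')
    rw [gp_comm]; exact this⟩

lemma trk_dist (hδ : IsHyperbolicWith X δ) {u : ℕ → X} {x y : X} {t : ℝ}
    (h1 : Trk o u x t) (h2 : Trk o u y t) : dist x y ≤ dist o x + dist o y - 2 * (t - δ) := by
  obtain ⟨m, hm1, hm2⟩ := (h1.and h2).exists
  rw [gp_comm] at hm2
  have := (sub_le_sub_right (le_min hm1 hm2) δ).trans (hδ x y (u m) o)
  simp only [gp] at this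
  rw [dist_comm x o] at this
  linarith

lemma tracking (hδ : IsHyperbolicWith X δ) (hδ0 : 0 ≤ δ) (l τ : ℝ) (hτ : 0 < τ) :
    ∃ κ C : ℝ, 0 < κ ∧ ∀ (z : ℕ → X) (N : ℕ),
      (∀ n ≥ N, (l - τ / 2) * n ≤ dist o (z n) ∧ dist (z n) (z (n + 1)) ≤ κ * n) →
      ∀ n ≥ N, ∀ m ≥ n, (l - τ) * n - C ≤ gp o (z n) (z m) := by
  by_cases hl : l - τ ≤ 0
  · refine ⟨1, 0, one_pos, fun z N _ n _ m _ => ?_⟩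
    have : (l - τ) * n ≤ 0 := mul_nonpos_of_nonpos_of_nonneg hl (Nat.cast_nonneg _)
    linarith [gp_nonneg o (z n) (z m)]
  push Not at hl
  obtain ⟨L0, hL0⟩ := exists_nat_ge (δ / (l - τ))
  set L : ℕ := L0 + 1 with hLdef
  have hL1 : (1 : ℝ) ≤ L := by rw [hLdef]; push_cast; linarith [(Nat.cast_nonneg L0 : (0:ℝ) ≤ L0)]
  have hL : δ ≤ (l - τ) * L := by
    rw [div_le_iff₀ hl] at hL0
    rw [hLdef]; push_cast; nlinarith
  have hLpos : (0 : ℝ) < L := by linarith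
  refine ⟨τ / (2 * L), L * τ / 2 + δ, by positivity, fun z N hz => ?_⟩
  set κ := τ / (2 * L) with hκ
  have hκ0 : 0 ≤ κ := by positivity
  have hκL : κ * L = τ / 2 := by rw [hκ]; field_simp
  have hd : ∀ n ≥ N, ∀ i ≤ L, dist (z n) (z (n + i)) ≤ i * (κ * (n + L)) := by
    intro n hn i
    induction i with
    | zero => intro _; simp
    | succ i ih =>
      intro hi
      have h1 := ih (by omega)
      have h2 := (hz (n + i) (by omega)).2
      have h3 : κ * ((n + i : ℕ) : ℝ) ≤ κ * (n + L) := by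
        apply mul_le_mul_of_nonneg_left _ hκ0
        have : (i : ℝ) ≤ L := by exact_mod_cast (by omega : i ≤ L)
        push_cast; linarith
      have h4 := dist_triangle (z n) (z (n + i)) (z (n + i + 1))
      rw [← add_assoc]
      push_cast
      linarith
  have hg : ∀ n ≥ N, ∀ i ≤ L, (l - τ) * n - L * τ / 2 ≤ gp o (z n) (z (n + i)) := by
    intro n hn i hi
    have h1 := hd n hn i hi
    have h2 := (hz n hn).1
    have h3 := gp_ge o (z n) (z (n + i))
    have hi' : (i : ℝ) ≤ L := by exact_mod_cast hi
    have h4 : (i : ℝ) * (κ * (n + L)) ≤ L * (κ * (n + L)) := by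
      apply mul_le_mul_of_nonneg_right hi'
      positivity
    have h5 : (L : ℝ) * (κ * (n + L)) = τ / 2 * n + τ / 2 * L := by rw [← hκL]; ring
    linarith
  have main : ∀ k : ℕ, ∀ n ≥ N, ∀ j : ℕ, j ≤ k → (l - τ) * n - (L * τ / 2 + δ) ≤ gp o (z n) (z (n + j)) := by
    intro k
    induction k with
    | zero =>
      intro n hn j hj
      have := hg n hn j (by omega)
      linarith
    | succ k ih =>
      intro n hn j hj
      by_cases hjL : j ≤ L
      · have := hg n hn j hjL
        linarith
      · have h1 := hg n hn L le_rfl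
        have h2 := ih (n + L) (by omega) (j - L) (by omega)
        rw [show n + L + (j - L) = n + j by omega] at h2
        have h3 := hδ (z n) (z (n + j)) (z (n + L)) o
        have h4 : (l - τ) * n - L * τ / 2 ≤ min (gp o (z n) (z (n + L))) (gp o (z (n + L)) (z (n + j))) := by
          apply le_min h1
          push_cast at h2
          linarith
        linarith
  intro n hn m hm
  have := main (m - n) n hn (m - n) le_rfl
  rwa [show n + (m - n) = m by omega] at this

lemma qball_measurable (ξ : Boundary X o) (r : ℝ) : MeasurableSet (qball (qB o) ξ r) :=
  MeasurableSpace.measurableSet_generateFrom ⟨ξ, r, rfl⟩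

lemma bnd_singleton (ξ : Boundary X o) : MeasurableSet ({ξ} : Set (Boundary X o)) := by
  have : ({ξ} : Set (Boundary X o)) = ⋂ k : ℕ, qball (qB o) ξ (1 / ((k : ℝ) + 1)) := by
    ext η
    simp only [mem_singleton_iff, mem_iInter]
    constructor
    · rintro rfl k
      show qB o η η < _
      rw [qB, if_pos rfl]; positivity
    · intro h
      by_contra hne
      have hq : qB o ξ η = Real.exp (-(gpB o ξ η)) := by rw [qB, if_neg (fun h => hne h.symm)]
      obtain ⟨k, hk⟩ := exists_nat_one_div_lt (Real.exp_pos (-(gpB o ξ η)))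
      have := h k
      have h2 : qB o ξ η < 1 / ((k : ℝ) + 1) := this
      rw [hq] at h2
      exact lt_asymm hk h2
  rw [this]
  exact MeasurableSet.iInter fun k => qball_measurable _ _

end Geom

/-! ### Walks of isometries -/

section WalkGeom
variable {G : Type*} [Group G] [Countable G] [MeasurableSpace G] [DiscreteMeasurableSpace G]
  {p : G → ℝ≥0∞} {P : Measure (ℕ → G)} {X : Type*} [MetricSpace X] {o : X} {δ : ℝ}

lemma rho_mul (ρ : G →* (X ≃ᵢ X)) (x y : G) (z : X) : ρ (x * y) z = ρ x (ρ y z) := by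
  rw [map_mul]; rfl

lemma rho_one (ρ : G →* (X ≃ᵢ X)) (z : X) : ρ 1 z = z := by
  rw [map_one]; rfl

lemma rho_dist (ρ : G →* (X ≃ᵢ X)) (x y : G) : dist o (ρ (x⁻¹ * y) o) = dist (ρ x o) (ρ y o) := by
  rw [← (ρ x).dist_eq, ← rho_mul]; simp

lemma rho_len_mul (ρ : G →* (X ≃ᵢ X)) (x y : G) : dist o (ρ (x * y) o) ≤ dist o (ρ x o) + dist o (ρ y o) := by
  rw [rho_mul]
  refine (dist_triangle _ (ρ x o) _).trans ?_
  rw [(ρ x).dist_eq]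

lemma walk_geom (hp : IsProb p) (hP : IsRWMeasure p P) (hδ : IsHyperbolicWith X δ) (hδ0 : 0 ≤ δ)
    (ρ : G →* (X ≃ᵢ X)) (hmom : FiniteFirstMoment p (fun g => dist o (ρ g o))) (l : ℝ)
    (hl : HasDrift p (fun g => dist o (ρ g o)) l) (τ : ℝ) (hτ : 0 < τ) :
    ∀ᵐ ω ∂P, ∀ᶠ n : ℕ in atTop, dist o (ρ (walk ω n) o) ≤ (l + τ) * n ∧
      ∀ m ≥ n, (l - τ) * n ≤ gp o (ρ (walk ω n) o) (ρ (walk ω m) o) := by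
  obtain ⟨κ, C, hκ, H⟩ := tracking (o := o) hδ hδ0 l (τ / 2) (by positivity)
  have h0 : ∀ x, 0 ≤ (fun g => dist o (ρ g o)) x := fun x => dist_nonneg
  have h1 : (fun g => dist o (ρ g o)) 1 = 0 := by simp [rho_one]
  filter_upwards [len_lln hp hP h0 h1 (rho_len_mul ρ) hmom l hl (min κ (τ / 2 / 2)) (by positivity)] with ω hω
  obtain ⟨N, hN⟩ := eventually_atTop.mp hω
  have hm1 := min_le_left κ (τ / 2 / 2)
  have hm2 := min_le_right κ (τ / 2 / 2)
  have H2 := H (fun n => ρ (walk ω n) o) N (fun n hn => by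
    obtain ⟨a1, a2, a3⟩ := hN n hn
    have hn0 : (0 : ℝ) ≤ n := Nat.cast_nonneg n
    refine ⟨le_trans (by gcongr) a1, ?_⟩
    have : dist (ρ (walk ω n) o) (ρ (walk ω (n + 1)) o) = dist o (ρ (ω n) o) := by
      rw [walk_succ, rho_mul, (ρ _).dist_eq]
    refine this.le.trans (a3.trans ?_)
    gcongr)
  obtain ⟨M, hM⟩ := exists_nat_ge (C / (τ / 2))
  filter_upwards [eventually_ge_atTop N, eventually_ge_atTop M] with n hn hnM
  have hn0 : (0 : ℝ) ≤ n := Nat.cast_nonneg n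
  refine ⟨(hN n hn).2.1.trans ?_, fun m hm => ?_⟩
  · gcongr; linarith
  · refine le_trans ?_ (H2 n hn m hm)
    have h3 : (M : ℝ) ≤ n := by exact_mod_cast hnM
    rw [div_le_iff₀ (by positivity)] at hM
    have : C ≤ n * (τ / 2) := hM.trans (by gcongr)
    linarith

lemma mkB_shift (u v : DivSeq X o) (h : ∀ n, v.1 n = u.1 (n + 1)) : mkB o u = mkB o v := by
  refine Quot.sound ?_
  have ht : Tendsto (fun q : ℕ × ℕ => (q.1, q.2 + 1)) atTop atTop := by
    refine tendsto_atTop.mpr fun q => ?_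
    filter_upwards [eventually_ge_atTop q] with r hr
    exact ⟨hr.1, hr.2.trans (Nat.le_succ _)⟩
  rw [bndRel]
  simp only [h]
  have hu : Tendsto (fun pr : ℕ × ℕ => gp o (u.1 pr.1) (u.1 pr.2)) atTop atTop := u.2
  exact hu.comp ht

lemma walk_equiv (hp : IsProb p) (hP : IsRWMeasure p P) (hδ : IsHyperbolicWith X δ)
    (ρ : G →* (X ≃ᵢ X)) (b : (ℕ → G) → Boundary X o)
    (hb : ∀ᵐ ω ∂P, ∃ h : IsDivergent o (fun n => ρ (walk ω n) o), b ω = mkB o ⟨_, h⟩) :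
    ∀ᵐ ω ∂P, b ω = bAct o (ρ (ω 0)) (b (shiftS ω)) := by
  have h2 := (rw_shift_mp hp hP).quasiMeasurePreserving.ae hb
  filter_upwards [hb, h2] with ω ⟨h, e⟩ ⟨h', e'⟩
  rw [e, e']
  refine mkB_shift _ _ fun n => ?_
  show ρ (ω 0) (ρ (walk (shiftS ω) n) o) = ρ (walk ω (n + 1)) o
  rw [← rho_mul, add_comm n 1, walk_add, walk_one]; rfl

/-- Regrouping of the differential entropy. -/
lemma diffEntropy_eq (hp : IsProb p) (hP : IsRWMeasure p P)
    (ρ : G →* (X ≃ᵢ X)) (b : (ℕ → G) → Boundary X o) (hbm : Measurable b)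
    (ha : ∀ g : X ≃ᵢ X, Measurable (bAct o g))
    (heq : ∀ᵐ ω ∂P, b ω = bAct o (ρ (ω 0)) (b (shiftS ω)))
    (hH : Integrable (fun ω : ℕ → G => -Real.log (p (ω 0)).toReal) P) :
    diffEntropy o (marginalStar p fun g => ρ g) (P.map b) =
      ∫ ω, lf (P.map b) (fun g => bAct o (ρ g)) b ω ∂P := by
  have h := lf_hasSum (a := fun g => bAct o (ρ g)) hp hP (fun g => ha _) hbm heq hH
  have h2 := h.tsum_fiberwise (fun g => ρ g)
  rw [← h2.tsum_eq, diffEntropy]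
  congr 1
  ext s
  have h3 : ∀ g : ((fun g => ρ g) ⁻¹' {s} : Set G), (p g).toReal * ∫ η, Real.log (rr (P.map b) (fun g => bAct o (ρ g)) g η).toReal
      ∂((P.map b).map (bAct o (ρ (g : G)))) = (p g).toReal * ∫ η, Real.log ((Measure.rnDeriv ((P.map b).map (bAct o s)) (P.map b) η).toReal)
      ∂((P.map b).map (bAct o s)) := by
    rintro ⟨g, hg⟩
    have : ρ g = s := hg
    simp only [rr, this]
  rw [tsum_congr h3, tsum_mul_right]
  congr 1
  rw [marginalStar, ← ENNReal.tsum_toReal_eq]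
  · congr 1
    rw [tsum_subtype ((fun g => ρ g) ⁻¹' {s}) p]
    congr 1
  · intro g
    rw [← piN_one hp hP]; exact piN_ne_top hp hP _ _

end WalkGeom

/-! ### Disintegrations -/

section Disint
variable {A B : Type*} [MeasurableSpace A] [MeasurableSpace B] {ν : Measure A} [IsProbabilityMeasure ν]
  {f : A → B} {νB : Measure B} {cond : B → Measure A}

lemma dis_prob (hf : Measurable f) (h : IsDisintegration ν f νB cond) : IsProbabilityMeasure νB := by
  rw [h.1]; exact Measure.isProbabilityMeasure_map hf.aemeasurable

lemma dis_aemeas_set (hf : Measurable f) (h : IsDisintegration ν f νB cond) (s : Set A) (hs : MeasurableSet s) :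
    AEMeasurable (fun b => cond b s) νB := by
  have := dis_prob hf h
  obtain ⟨g, hg, hgle, hgi⟩ := exists_measurable_le_lintegral_eq νB (fun b => cond b s)
  obtain ⟨g', hg', hgle', hgi'⟩ := exists_measurable_le_lintegral_eq νB (fun b => cond b sᶜ)
  rw [← h.2.2.2 s hs] at hgi
  rw [← h.2.2.2 sᶜ hs.compl] at hgi'
  have h1 : ∀ᵐ b ∂νB, cond b s + cond b sᶜ = 1 := by
    filter_upwards [h.2.1] with b hb
    rw [measure_add_measure_compl hs, measure_univ]
  have h2 : ∀ᵐ b ∂νB, g b + g' b ≤ 1 := by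
    filter_upwards [h1] with b hb
    rw [← hb]; exact add_le_add (hgle b) (hgle' b)
  have h3 : ∫⁻ b, (g b + g' b) ∂νB = ∫⁻ b, 1 ∂νB := by
    rw [lintegral_add_left hg, ← hgi, ← hgi', measure_add_measure_compl hs]
    simp
  have h4 : (fun b => g b + g' b) =ᵐ[νB] fun _ => 1 := by
    refine ae_eq_of_ae_le_of_lintegral_le h2 ?_ aemeasurable_const ?_
    · rw [h3]; simp
    · rw [h3]
  refine ⟨g, hg, ?_⟩
  filter_upwards [h1, h4] with b h1 h4
  have h4 : g b + g' b = 1 := h4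
  refine le_antisymm ?_ (hgle b)
  have hfin : g' b ≠ ∞ := by
    intro h; rw [h] at h4; simp at h4
  have : cond b s + g' b ≤ g b + g' b := by
    rw [h4, ← h1]; gcongr; exact hgle' b
  exact (ENNReal.add_le_add_iff_right hfin).mp this

lemma dis_fun (hf : Measurable f) (h : IsDisintegration ν f νB cond) (φ : A → ℝ≥0∞) (hφ : Measurable φ) :
    AEMeasurable (fun b => ∫⁻ x, φ x ∂(cond b)) νB ∧ ∫⁻ b, ∫⁻ x, φ x ∂(cond b) ∂νB = ∫⁻ x, φ x ∂ν := by
  refine Measurable.ennreal_induction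
    (motive := fun φ : A → ℝ≥0∞ => AEMeasurable (fun b => ∫⁻ x, φ x ∂(cond b)) νB ∧
      ∫⁻ b, ∫⁻ x, φ x ∂(cond b) ∂νB = ∫⁻ x, φ x ∂ν) ?_ ?_ ?_ hφ
  · intro c s hs
    simp only [lintegral_indicator_const hs]
    have := dis_aemeas_set hf h s hs
    refine ⟨this.const_mul _, ?_⟩
    rw [lintegral_const_mul'' _ this, ← h.2.2.2 s hs]
  · intro φ ψ hd hφ hψ ih1 ih2
    simp only [Pi.add_apply]
    simp only [lintegral_add_left hφ]
    refine ⟨ih1.1.add ih2.1, ?_⟩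
    rw [lintegral_add_left' ih1.1, ih1.2, ih2.2]
  · intro φ hφ hmono ih
    have hm : ∀ b, ∫⁻ x, (⨆ n, φ n x) ∂(cond b) = ⨆ n, ∫⁻ x, φ n x ∂(cond b) := fun b => lintegral_iSup hφ hmono
    simp only [hm]
    refine ⟨AEMeasurable.iSup fun n => (ih n).1, ?_⟩
    rw [lintegral_iSup' (fun n => (ih n).1) (Eventually.of_forall fun b n m hnm => lintegral_mono (hmono hnm)),
      lintegral_iSup hφ hmono]
    simp only [(ih _).2]

lemma dis_null (hf : Measurable f) (h : IsDisintegration ν f νB cond) {Q : A → Prop} (hQ : ∀ᵐ x ∂ν, Q x) :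
    ∀ᵐ b ∂νB, ∀ᵐ x ∂(cond b), Q x := by
  have h1 := dis_aemeas_set hf h _ (measurableSet_toMeasurable ν {x | ¬ Q x})
  have h2 := h.2.2.2 _ (measurableSet_toMeasurable ν {x | ¬ Q x})
  rw [measure_toMeasurable, ae_iff.mp hQ] at h2
  have h3 := (lintegral_eq_zero_iff' h1).mp h2.symm
  filter_upwards [h3] with b hb
  exact measure_mono_null (subset_toMeasurable _ _) hb

lemma dis_fiber (hf : Measurable f) (h : IsDisintegration ν f νB cond) (hsing : ∀ b : B, MeasurableSet ({b} : Set B)) :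
    ∀ᵐ b ∂νB, ∀ᵐ x ∂(cond b), f x = b := by
  filter_upwards [h.2.1, h.2.2.1] with b hb1 hb2
  exact (prob_compl_eq_zero_iff (hf (hsing b))).mpr hb2

lemma dis_setfun (hf : Measurable f) (h : IsDisintegration ν f νB cond) (hsing : ∀ b : B, MeasurableSet ({b} : Set B))
    (φ : A → ℝ≥0∞) (hφ : Measurable φ) (T : Set B) (hT : MeasurableSet T) :
    ∫⁻ b in T, ∫⁻ x, φ x ∂(cond b) ∂νB = ∫⁻ x in f ⁻¹' T, φ x ∂ν := by
  rw [← lintegral_indicator (hf hT), ← (dis_fun hf h _ (hφ.indicator (hf hT))).2, ← lintegral_indicator hT]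
  apply lintegral_congr_ae
  filter_upwards [dis_fiber hf h hsing] with b hb
  by_cases hbT : b ∈ T
  · rw [indicator_of_mem hbT]
    apply lintegral_congr_ae
    filter_upwards [hb] with x hx
    rw [indicator_of_mem]; show f x ∈ T; rwa [hx]
  · rw [indicator_of_notMem hbT]
    symm
    rw [lintegral_eq_zero_iff (hφ.indicator (hf hT))]
    filter_upwards [hb] with x hx
    rw [indicator_of_notMem]; rfl
    show ¬ f x ∈ T; rwa [hx]

/-- The counting argument in abstract form. -/
lemma abstract_main {Ω G ι : Type*} [MeasurableSpace Ω] [Countable G] (P : Measure Ω) [IsProbabilityMeasure P]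
    (bnd : Ω → A) (hbnd : Measurable bnd) (hν : ν = P.map bnd) (hf : Measurable f)
    (h : IsDisintegration ν f νB cond) (hsing : ∀ b : B, MeasurableSet ({b} : Set B))
    (W : Set Ω) (hW : MeasurableSet W) (ε : ℝ) (hε : 0 < ε) (hW1 : 2 * P Wᶜ ≤ ENNReal.ofReal ε)
    (hW2 : 2 * P Wᶜ ≤ ENNReal.ofReal ε * ENNReal.ofReal ε) (N : ℕ)
    (E : ℕ → G → Set Ω) (hE : ∀ n x, MeasurableSet (E n x)) (hEU : ∀ n ≥ N, ⋃ x, E n x = W)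
    (hEd : ∀ n, Pairwise (Function.onFun Disjoint (E n)))
    (S : ℕ → G → Set A) (hS : ∀ n x, MeasurableSet (S n x)) (hES : ∀ n ≥ N, ∀ x, ∀ ω ∈ E n x, bnd ω ∈ S n x)
    (K : ℕ → ℝ≥0∞) (hK : ∀ n ≥ N, ∀ x, ∀ T, MeasurableSet T → P (E n x ∩ bnd ⁻¹' (f ⁻¹' T)) ≤ K n * νB T)
    (U : ℕ → ι → Set A) (M : ℕ → ℝ≥0∞)
    (hM : ∀ n ≥ N, ∀ i b, {x | (S n x ∩ U n i ∩ f ⁻¹' {b}).Nonempty}.Finite ∧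
      ({x | (S n x ∩ U n i ∩ f ⁻¹' {b}).Nonempty}.ncard : ℝ≥0∞) ≤ M n) :
    ∃ (D : Set B) (F : Set A), MeasurableSet D ∧ ENNReal.ofReal (1 - ε) ≤ νB D ∧ MeasurableSet F ∧
      (∀ᵐ η ∂νB, η ∈ D → ENNReal.ofReal (1 - ε) ≤ cond η F) ∧ ENNReal.ofReal (1 - ε) ≤ ν F ∧
      ∀ᵐ η ∂νB, ∀ i, ∀ n ≥ N, cond η (U n i ∩ F) ≤ 2 * (M n * K n) := by
  have hBp := dis_prob hf h
  -- densities
  have hmle : ∀ s : Set Ω, (P.restrict s).map bnd ≪ ν := by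
    intro s
    rw [hν]
    exact (Measure.absolutelyContinuous_of_le Measure.restrict_le_self).map hbnd
  set m := (P.restrict W).map bnd with hm
  set φ := m.rnDeriv ν with hφ
  have hφm : Measurable φ := Measure.measurable_rnDeriv _ _
  have hmd : ν.withDensity φ = m := Measure.withDensity_rnDeriv_eq _ _ (hmle W)
  set ψ : ℕ → G → A → ℝ≥0∞ := fun n x => (S n x).indicator (((P.restrict (E n x)).map bnd).rnDeriv ν) with hψ
  have hψm : ∀ n x, Measurable (ψ n x) := fun n x => (Measure.measurable_rnDeriv _ _).indicator (hS n x)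
  have hψd : ∀ n ≥ N, ∀ x, ν.withDensity (ψ n x) = (P.restrict (E n x)).map bnd := by
    intro n hn x
    rw [hψ]
    simp only
    rw [withDensity_indicator (hS n x), ← restrict_withDensity (hS n x),
      Measure.withDensity_rnDeriv_eq _ _ (hmle _), Measure.restrict_map hbnd (hS n x), Measure.restrict_restrict (hbnd (hS n x))]
    congr 2
    exact inter_eq_self_of_subset_right fun ω hω => hES n hn x ω hω
  have hsum : ∀ n ≥ N, φ =ᵐ[ν] fun y => ∑' x, ψ n x y := by
    intro n hn
    have h1 : m = ν.withDensity (fun y => ∑' x, ψ n x y) := by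
      have : (fun y => ∑' x, ψ n x y) = ∑' x, ψ n x := by
        ext y; rw [ENNReal.tsum_apply]
      rw [this, withDensity_tsum (hψm n)]
      simp only [hψd n hn]
      rw [hm, ← hEU n hn, Measure.restrict_iUnion (hEd n) (hE n)]
      ext s hs
      rw [Measure.map_apply hbnd hs, Measure.sum_apply _ (hbnd hs), Measure.sum_apply _ hs]
      simp only [Measure.map_apply hbnd hs]
    rw [hφ, h1]
    exact Measure.rnDeriv_withDensity ν (Measurable.tsum (hψm n))
  -- the set F
  set F : Set A := {y | (1 / 2 : ℝ≥0∞) ≤ φ y} with hF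
  have hFm : MeasurableSet F := measurableSet_le measurable_const hφm
  have hFc : ν Fᶜ ≤ 2 * P Wᶜ := by
    have h1 : m univ = P W := by rw [hm, Measure.map_apply hbnd MeasurableSet.univ]; simp
    have h2 : m F ≤ ν F := by
      rw [hm, hν]
      exact Measure.map_mono Measure.restrict_le_self hbnd F
    have h3 : m Fᶜ ≤ 1 / 2 * ν Fᶜ := by
      rw [← hmd, withDensity_apply _ hFm.compl, ← setLIntegral_const]
      refine setLIntegral_mono measurable_const fun y hy => ?_
      have : ¬ (1 / 2 : ℝ≥0∞) ≤ φ y := hy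
      exact (not_le.mp this).le
    have h4 := measure_add_measure_compl (μ := m) hFm
    have h5 := prob_add_prob_compl (μ := ν) hFm
    have h6 := prob_add_prob_compl (μ := P) hW
    have h7 : (1 / 2 : ℝ≥0∞) * ν Fᶜ + 1 / 2 * ν Fᶜ = ν Fᶜ := by
      rw [← add_mul, ENNReal.add_halves, one_mul]
    have h8 : P W ≤ ν F + 1 / 2 * ν Fᶜ := by
      rw [← h1, ← h4]; exact add_le_add h2 h3
    have h9 : ν F + 1 / 2 * ν Fᶜ + 1 / 2 * ν Fᶜ ≤ ν F + 1 / 2 * ν Fᶜ + P Wᶜ := by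
      calc ν F + 1 / 2 * ν Fᶜ + 1 / 2 * ν Fᶜ = 1 := by rw [add_assoc, h7, h5]
        _ = P W + P Wᶜ := h6.symm
        _ ≤ _ := by gcongr
    have h10 : 1 / 2 * ν Fᶜ ≤ P Wᶜ := by
      refine (ENNReal.add_le_add_iff_left ?_).mp h9
      exact ENNReal.add_ne_top.mpr ⟨measure_ne_top _ _, ENNReal.mul_ne_top (by simp) (measure_ne_top _ _)⟩
    calc ν Fᶜ = 2 * (1 / 2 * ν Fᶜ) := by rw [two_mul, h7]
      _ ≤ _ := by gcongr
  -- the set D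
  have hae := dis_aemeas_set hf h Fᶜ hFm.compl
  set g := hae.mk _ with hg
  have hgm : Measurable g := hae.measurable_mk
  have hgae : ∀ᵐ b ∂νB, cond b Fᶜ = g b := hae.ae_eq_mk
  have hεt : ENNReal.ofReal ε ≠ ∞ := ENNReal.ofReal_ne_top
  have hε0 : ENNReal.ofReal ε ≠ 0 := by simpa using hε
  have hone : ∀ a b : ℝ≥0∞, a + b = 1 → b ≤ ENNReal.ofReal ε → ENNReal.ofReal (1 - ε) ≤ a := by
    intro a b hab hb
    rw [ENNReal.ofReal_sub _ hε.le, ENNReal.ofReal_one, tsub_le_iff_right, ← hab]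
    gcongr
  refine ⟨{b | g b ≤ ENNReal.ofReal ε}, F, measurableSet_le hgm measurable_const, ?_, hFm, ?_, ?_, ?_⟩
  · refine hone _ _ (prob_add_prob_compl (measurableSet_le hgm measurable_const)) ?_
    have h1 : ENNReal.ofReal ε * νB {b | ENNReal.ofReal ε ≤ g b} ≤ ∫⁻ b, g b ∂νB := mul_meas_ge_le_lintegral hgm _
    have h2 : ∫⁻ b, g b ∂νB = ν Fᶜ := by
      rw [h.2.2.2 _ hFm.compl]
      exact (lintegral_congr_ae hgae).symm
    have h3 : ENNReal.ofReal ε * νB {b | ENNReal.ofReal ε ≤ g b} ≤ ENNReal.ofReal ε * ENNReal.ofReal ε :=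
      h1.trans (h2.le.trans (hFc.trans hW2))
    have h4 := (ENNReal.mul_le_mul_iff_right hε0 hεt).mp h3
    refine (measure_mono ?_).trans h4
    intro b hb
    have : ¬ g b ≤ ENNReal.ofReal ε := hb
    exact (not_le.mp this).le
  · filter_upwards [hgae, h.2.1] with b h1 h2 hb
    refine hone _ _ (prob_add_prob_compl hFm) ?_
    rw [h1]; exact hb
  · exact hone _ _ (prob_add_prob_compl hFm) (hFc.trans hW1)
  · have hintg : ∀ᵐ b ∂νB, ∀ n ≥ N, ∀ x, ∫⁻ y, ψ n x y ∂(cond b) ≤ K n := by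
      rw [ae_all_iff]; intro n
      rw [eventually_imp_distrib_left]; intro hn
      rw [ae_all_iff]; intro x
      have h1 := (dis_fun hf h _ (hψm n x)).1
      have h2 : (h1.mk _) ≤ᵐ[νB] fun _ => K n := by
        refine ae_le_of_forall_setLIntegral_le_of_sigmaFinite h1.measurable_mk fun T hT _ => ?_
        rw [setLIntegral_const, ← lintegral_congr_ae (ae_restrict_of_ae h1.ae_eq_mk), dis_setfun hf h hsing _ (hψm n x) T hT,
          ← withDensity_apply _ (hf hT), hψd n hn x, Measure.map_apply hbnd (hf hT), Measure.restrict_apply (hbnd (hf hT)), inter_comm]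
        exact hK n hn x T hT
      filter_upwards [h2, h1.ae_eq_mk] with b hb1 hb2
      rw [hb2]; exact hb1
    have hsum' : ∀ᵐ b ∂νB, ∀ n ≥ N, ∀ᵐ y ∂(cond b), φ y = ∑' x, ψ n x y := by
      rw [ae_all_iff]; intro n
      rw [eventually_imp_distrib_left]; intro hn
      exact dis_null hf h (hsum n hn)
    filter_upwards [hintg, hsum', dis_fiber hf h hsing] with b h1 h2 h3 i n hn
    obtain ⟨hfin, hcard⟩ := hM n hn i b
    set J := hfin.toFinset with hJ
    have hm2 : Measurable (fun y => ∑ x ∈ J, ψ n x y) := Finset.measurable_fun_sum _ fun x _ => hψm n x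
    have hle : cond b (U n i ∩ F) ≤ cond b {y | (1 / 2 : ℝ≥0∞) ≤ ∑ x ∈ J, ψ n x y} := by
      apply measure_mono_ae
      filter_upwards [h2 n hn, h3] with y hy1 hy2 hy
      have hy : y ∈ U n i ∩ F := hy
      show (1 / 2 : ℝ≥0∞) ≤ ∑ x ∈ J, ψ n x y
      have : ∑' x, ψ n x y = ∑ x ∈ J, ψ n x y := by
        apply tsum_eq_sum
        intro x hx
        rw [hψ]
        apply indicator_of_notMem
        intro hyS
        apply hx
        rw [hJ, Finite.mem_toFinset]
        exact ⟨y, ⟨hyS, hy.1⟩, hy2⟩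
      rw [← this, ← hy1]
      exact hy.2
    have hmk : (1 / 2 : ℝ≥0∞) * cond b {y | (1 / 2 : ℝ≥0∞) ≤ ∑ x ∈ J, ψ n x y} ≤ M n * K n := by
      refine (mul_meas_ge_le_lintegral hm2 _).trans ?_
      rw [lintegral_finsetSum _ fun x _ => hψm n x]
      refine (Finset.sum_le_card_nsmul _ _ (K n) fun x _ => h1 n hn x).trans ?_
      rw [nsmul_eq_mul, hJ, ← Set.ncard_eq_toFinset_card _ hfin]
      gcongr
    calc cond b (U n i ∩ F) ≤ cond b {y | (1 / 2 : ℝ≥0∞) ≤ ∑ x ∈ J, ψ n x y} := hle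
      _ = 2 * (1 / 2 * cond b {y | (1 / 2 : ℝ≥0∞) ≤ ∑ x ∈ J, ψ n x y}) := by
        rw [two_mul, ← add_mul, ENNReal.add_halves, one_mul]
      _ ≤ _ := by gcongr

end Disint

/-! ### Assembling the proof -/

lemma good_event {Ω : Type*} [MeasurableSpace Ω] (P : Measure Ω) [IsProbabilityMeasure P]
    (Q0 : Ω → Prop) (hQ0 : ∀ᵐ ω ∂P, Q0 ω) (Q : ℕ → Ω → Prop) (hm : ∀ n, MeasurableSet {ω | Q n ω})
    (hQ : ∀ᵐ ω ∂P, ∀ᶠ n in atTop, Q n ω) (κ : ℝ≥0∞) (hκ : κ ≠ 0) :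
    ∃ (N : ℕ) (W : Set Ω), MeasurableSet W ∧ P Wᶜ ≤ κ ∧ ∀ ω ∈ W, Q0 ω ∧ ∀ n ≥ N, Q n ω := by
  set V : ℕ → Set Ω := fun N => ⋂ n ≥ N, {ω | Q n ω} with hV
  have hVm : ∀ N, MeasurableSet (V N) := fun N =>
    MeasurableSet.iInter fun n => MeasurableSet.iInter fun _ => hm n
  have hanti : Antitone fun N => (V N)ᶜ := by
    intro N M hNM
    apply compl_subset_compl.mpr
    intro ω hω
    simp only [hV, mem_iInter] at hω ⊢
    exact fun n hn => hω n (hNM.trans hn)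
  have h1 := tendsto_measure_iInter_atTop (μ := P) (s := fun N => (V N)ᶜ)
    (fun N => (hVm N).compl.nullMeasurableSet) hanti ⟨0, measure_ne_top _ _⟩
  have h2 : P (⋂ N, (V N)ᶜ) = 0 := by
    refine measure_mono_null ?_ (ae_iff.mp hQ)
    intro ω hω h
    obtain ⟨N, hN⟩ := eventually_atTop.mp h
    have := mem_iInter.mp hω N
    apply this
    simp only [hV, mem_iInter]
    exact fun n hn => hN n hn
  rw [h2] at h1
  obtain ⟨N, hN⟩ := (h1.eventually_lt_const (pos_iff_ne_zero.mpr hκ)).exists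
  refine ⟨N, V N ∩ (toMeasurable P {ω | ¬ Q0 ω})ᶜ, (hVm N).inter (measurableSet_toMeasurable _ _).compl, ?_, ?_⟩
  · rw [compl_inter, compl_compl]
    refine (measure_union_le _ _).trans ?_
    rw [measure_toMeasurable, ae_iff.mp hQ0, add_zero]
    exact hN.le
  · rintro ω ⟨hω1, hω2⟩
    refine ⟨?_, ?_⟩
    · by_contra h
      exact hω2 (subset_toMeasurable _ _ h)
    · simp only [hV, mem_iInter] at hω1
      exact hω1

lemma geo_one {X : Type*} [MetricSpace X] {o : X} {δ : ℝ} (hδ : IsHyperbolicWith X δ) (hδ0 : 0 ≤ δ)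
    {u u' w w' v : DivSeq X o} {x x' : X} {t s R : ℝ} (h1 : Trk o u.1 x t) (h1' : Trk o u'.1 x' t)
    (h2 : qB o (mkB o u) (mkB o w) < Real.exp (-(t - 3 * δ - 1)))
    (h2' : qB o (mkB o u') (mkB o w') < Real.exp (-(t - 3 * δ - 1)))
    (h3 : qB o (mkB o v) (mkB o w) < Real.exp (-s)) (h3' : qB o (mkB o v) (mkB o w') < Real.exp (-s))
    (hs : t ≤ s) (hx : dist o x ≤ R) (hx' : dist o x' ≤ R) :
    dist x x' ≤ 2 * R - 2 * t + (12 * δ + 2) := by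
  have a1 := trk_left hδ h1 h2 (by linarith)
  have a1' := trk_left hδ h1' h2' (by linarith)
  have a2 := trk_right hδ a1 h3
  have a2' := trk_right hδ a1' h3'
  rw [min_eq_left (by linarith)] at a2 a2'
  have := trk_dist hδ a2 a2'
  linarith

lemma qB_self_lt {X : Type*} [MetricSpace X] {o : X} (ξ : Boundary X o) (s : ℝ) : qB o ξ ξ < Real.exp (-s) := by
  simp [qB, Real.exp_pos]

lemma meas_walk_set {G : Type*} [Group G] [Countable G] [MeasurableSpace G] [DiscreteMeasurableSpace G]
    (n : ℕ) (R : G → Prop) : MeasurableSet {ω : ℕ → G | R (walk ω n)} :=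
  measurable_walk n (MeasurableSet.of_discrete (s := {x | R x}))

lemma meas_walk_set2 {G : Type*} [Group G] [Countable G] [MeasurableSpace G] [DiscreteMeasurableSpace G]
    (n m : ℕ) (R : G → G → Prop) : MeasurableSet {ω : ℕ → G | R (walk ω n) (walk ω m)} := by
  have : {ω : ℕ → G | R (walk ω n) (walk ω m)} = ⋃ x, {ω | walk ω n = x} ∩ {ω | R x (walk ω m)} := by
    ext ω; simp
  rw [this]
  exact MeasurableSet.iUnion fun x => (measurableSet_walk n x).inter (meas_walk_set m (R x))

/-- Lemma 3.3: the uniform upper bound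
`ν_π^η(B(ξ,e^{-ln}) × ∂X* ∩ F) ≤ C_ε e^{-n(h̄-ε)}` on a large set `D` of `η`'s and a
large set `F`. -/
theorem statement10
    (X Xs : Type*) [MetricSpace X] [MetricSpace Xs] [ProperSpace X] [ProperSpace Xs]
    (hX : IsHyperbolic X) (hXs : IsHyperbolic Xs)
    (hXg : IsRoughGeodesicSpace X) (hXsg : IsRoughGeodesicSpace Xs)
    (o : X) (os : Xs)
    (Γb : Subgroup ((X ≃ᵢ X) × (Xs ≃ᵢ Xs))) [Countable Γb]
    [MeasurableSpace Γb] [DiscreteMeasurableSpace Γb]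
    (p : Γb → ℝ≥0∞) (hp : IsProb p)
    (hmom : FiniteFirstMoment p fun γ : Γb => disp o os γ)
    (hμne : IsNonElementarySubgroup
      (Subgroup.closure ((fun γ : Γb => proj1 γ) '' {γ : Γb | p γ ≠ 0})))
    (hμsne : IsNonElementarySubgroup
      (Subgroup.closure ((fun γ : Γb => proj2 γ) '' {γ : Γb | p γ ≠ 0})))
    (P : Measure (ℕ → Γb)) (hP : IsRWMeasure p P)
    (hgrow : FinExpGrowth fun γ : Γb => disp o os γ)
    (ν : Measure (Boundary X o × Boundary Xs os))
    (hν : IsJointHarmonic o os P (fun ω n => proj1 (walk ω n) o)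
      (fun ω n => proj2 (walk ω n) os) ν)
    (νs : Measure (Boundary Xs os))
    (condν : Boundary Xs os → Measure (Boundary X o × Boundary Xs os))
    (hdis : IsDisintegration ν Prod.snd νs condν)
    (hπ l : ℝ) (hhπ : HasEntropy p hπ)
    (hl : HasDrift p (fun γ : Γb => dist o (proj1 γ o)) l)
    (hbm : ∀ g : Xs ≃ᵢ Xs, Measurable (bAct os g))
    (hst : ℝ)
    (hhst : hst = diffEntropy os (marginalStar p fun γ : Γb => proj2 γ) νs)
 :
    ∀ ε : ℝ, 0 < ε →
      ∃ (N : ℕ) (D : Set (Boundary Xs os))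
        (F : Set (Boundary X o × Boundary Xs os)) (Cε : ℝ),
        MeasurableSet D ∧ ENNReal.ofReal (1 - ε) ≤ νs D ∧ MeasurableSet F ∧
        (∀ᵐ η ∂νs, η ∈ D → ENNReal.ofReal (1 - ε) ≤ condν η F) ∧
        ENNReal.ofReal (1 - ε) ≤ ν F ∧
        ∀ᵐ η ∂νs, η ∈ D → ∀ ξ : Boundary X o, ∀ n : ℕ, N ≤ n →
          condν η ((qball (qB o) ξ (Real.exp (-(l * n))) ×ˢ
              (Set.univ : Set (Boundary Xs os))) ∩ F)
            ≤ ENNReal.ofReal (Cε * Real.exp (-(n * (hπ - hst - ε)))) := by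
  intro ε hε
  have hPp : IsProbabilityMeasure P := hP.1
  obtain ⟨δ, hδ0, hδ⟩ := hX
  obtain ⟨δs, hδs0, hδs⟩ := hXs
  set ρ1 : Γb →* (X ≃ᵢ X) := (MonoidHom.fst _ _).comp Γb.subtype with hρ1
  set ρ2 : Γb →* (Xs ≃ᵢ Xs) := (MonoidHom.snd _ _).comp Γb.subtype with hρ2
  have hdispmax : ∀ γ : Γb, disp o os γ = max (dist o (ρ1 γ o)) (dist os (ρ2 γ os)) := fun γ => rfl
  have hd0 : ∀ γ : Γb, 0 ≤ disp o os γ := fun γ => dist_nonneg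
  have hmomle : ∀ f : Γb → ℝ, (∀ γ, f γ ≤ disp o os γ) → FiniteFirstMoment p f := by
    intro f hf
    refine ne_top_of_le_ne_top hmom (ENNReal.tsum_le_tsum fun γ => ?_)
    gcongr
    exact hf γ
  have hmom1 : FiniteFirstMoment p fun γ => dist o (ρ1 γ o) :=
    hmomle _ fun γ => by rw [hdispmax]; exact le_max_left _ _
  have hmom2 : FiniteFirstMoment p fun γ => dist os (ρ2 γ os) :=
    hmomle _ fun γ => by rw [hdispmax]; exact le_max_right _ _
  obtain ⟨ls, hls⟩ := len_drift_exists (f := fun γ : Γb => dist os (ρ2 γ os)) hp hP (fun _ => dist_nonneg)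
    (by simp [rho_one]) (rho_len_mul ρ2) hmom2
  have hH := entropy_finite hp hP hd0 hmom hgrow
  obtain ⟨bnd, hbndm, hνb, hbndae⟩ := hν
  have hνp : IsProbabilityMeasure ν := by
    rw [hνb]; exact Measure.isProbabilityMeasure_map hbndm.aemeasurable
  set b : (ℕ → Γb) → Boundary Xs os := fun ω => (bnd ω).2 with hb
  have hbmeas : Measurable b := measurable_snd.comp hbndm
  have hνs : νs = P.map b := by
    rw [hdis.1, hνb, Measure.map_map measurable_snd hbndm]; rfl
  have heq : ∀ᵐ ω ∂P, b ω = bAct os (ρ2 (ω 0)) (b (shiftS ω)) := by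
    apply walk_equiv hp hP hδs ρ2 b
    filter_upwards [hbndae] with ω hω
    obtain ⟨h1, h2, h3⟩ := hω
    exact ⟨h2, by rw [hb]; simp only [h3]; rfl⟩
  have hDE := diffEntropy_eq hp hP ρ2 b hbmeas hbm heq hH
  have hhst' : hst = ∫ ω, lf (P.map b) (fun g => bAct os (ρ2 g)) b ω ∂P := by
    rw [hhst, hνs, ← hDE]; rfl
  obtain ⟨c0, hc0, hgr⟩ := hgrow
  set τ : ℝ := ε / (4 * c0 + 2) with hτd
  have hτ : 0 < τ := by positivity
  have hτε : 4 * c0 * τ + 2 * τ = ε := by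
    rw [hτd]; field_simp
  set c : ℝ := hst + τ with hc
  have hQQ := QQ_lower hp hP (a := fun g => bAct os (ρ2 g)) (fun g => hbm _) hbmeas heq hH c
    (by rw [← hhst', hc]; linarith)
  have hg1 := walk_geom hp hP hδ hδ0 ρ1 hmom1 l hl τ hτ
  have hg2 := walk_geom hp hP hδs hδs0 ρ2 hmom2 ls hls τ hτ
  have hent := entropy_lower hp hP hH hπ hhπ τ hτ
  have hpos := piN_pos_ae hp hP
  set κ : ℝ≥0∞ := min (ENNReal.ofReal ε) (ENNReal.ofReal ε * ENNReal.ofReal ε) / 2 with hκd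
  have hε0 : ENNReal.ofReal ε ≠ 0 := by simpa using hε
  have hκ : κ ≠ 0 := by
    rw [hκd]
    apply ENNReal.div_ne_zero.mpr
    refine ⟨?_, by simp⟩
    have h1 : 0 < ENNReal.ofReal ε := pos_iff_ne_zero.mpr hε0
    exact (lt_min h1 (ENNReal.mul_pos hε0 hε0)).ne'
  obtain ⟨N, W, hWm, hWκ, hW⟩ := good_event P
    (fun ω => (∃ (h1 : IsDivergent o (fun n => proj1 (walk ω n) o)) (h2 : IsDivergent os (fun n => proj2 (walk ω n) os)),
      bnd ω = (mkB o ⟨fun n => proj1 (walk ω n) o, h1⟩, mkB os ⟨fun n => proj2 (walk ω n) os, h2⟩)) ∧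
      ∀ n, piN p n (walk ω n) ≠ 0) (hbndae.and hpos)
    (fun n ω => ((dist o (ρ1 (walk ω n) o) ≤ (l + τ) * n ∧
        ∀ m ≥ n, (l - τ) * n ≤ gp o (ρ1 (walk ω n) o) (ρ1 (walk ω m) o)) ∧
      (dist os (ρ2 (walk ω n) os) ≤ (ls + τ) * n ∧
        ∀ m ≥ n, (ls - τ) * n ≤ gp os (ρ2 (walk ω n) os) (ρ2 (walk ω m) os))) ∧
      (hπ - τ) * n ≤ -Real.log (piN p n (walk ω n)).toReal ∧
      (ENNReal.ofReal (Real.exp (c * n)))⁻¹ ≤ QQ (P.map b) (fun g => bAct os (ρ2 g)) b n ω)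
    (by
      intro n
      have e1 : MeasurableSet {ω : ℕ → Γb | ∀ m ≥ n, (l - τ) * n ≤ gp o (ρ1 (walk ω n) o) (ρ1 (walk ω m) o)} := by
        simp only [ofPred_forall]
        exact MeasurableSet.iInter fun m => MeasurableSet.iInter fun _ =>
          meas_walk_set2 n m fun x y => (l - τ) * n ≤ gp o (ρ1 x o) (ρ1 y o)
      have e2 : MeasurableSet {ω : ℕ → Γb | ∀ m ≥ n, (ls - τ) * n ≤ gp os (ρ2 (walk ω n) os) (ρ2 (walk ω m) os)} := by
        simp only [ofPred_forall]
        exact MeasurableSet.iInter fun m => MeasurableSet.iInter fun _ =>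
          meas_walk_set2 n m fun x y => (ls - τ) * n ≤ gp os (ρ2 x os) (ρ2 y os)
      exact (((meas_walk_set n fun x => dist o (ρ1 x o) ≤ (l + τ) * n).inter e1).inter
        ((meas_walk_set n fun x => dist os (ρ2 x os) ≤ (ls + τ) * n).inter e2)).inter
        ((meas_walk_set n fun x => (hπ - τ) * n ≤ -Real.log (piN p n x).toReal).inter
          (measurableSet_le measurable_const (measurable_QQ _ _ _ hbmeas n))))
    (by
      filter_upwards [hQQ, hg1, hg2, hent] with ω a1 a2 a3 a4
      filter_upwards [a1, a2, a3, a4] with n b1 b2 b3 b4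
      exact ⟨⟨b2, b3⟩, b4, b1⟩) κ hκ
  have h2κ : 2 * P Wᶜ ≤ min (ENNReal.ofReal ε) (ENNReal.ofReal ε * ENNReal.ofReal ε) := by
    calc 2 * P Wᶜ ≤ 2 * κ := by gcongr
      _ = _ := ENNReal.mul_div_cancel (by simp) (by simp)
  set E : ℕ → Γb → Set (ℕ → Γb) := fun n x => W ∩ {ω | walk ω n = x} with hE
  have hEm : ∀ n x, MeasurableSet (E n x) := fun n x => hWm.inter (measurableSet_walk n x)
  -- tracking data on the good event
  have key : ∀ n ≥ N, ∀ x, ∀ ω ∈ E n x, ∃ (u : DivSeq X o) (us : DivSeq Xs os),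
      bnd ω = (mkB o u, mkB os us) ∧ Trk o u.1 (ρ1 x o) ((l - τ) * n) ∧
      Trk os us.1 (ρ2 x os) ((ls - τ) * n) ∧ dist o (ρ1 x o) ≤ (l + τ) * n ∧
      dist os (ρ2 x os) ≤ (ls + τ) * n := by
    rintro n hn x ω ⟨hω, hx⟩
    have hx : walk ω n = x := hx
    obtain ⟨⟨⟨h1, h2, h3⟩, -⟩, h4⟩ := hW ω hω
    obtain ⟨⟨⟨k1, k2⟩, k3, k4⟩, -⟩ := h4 n hn
    rw [hx] at k1 k2 k3 k4
    refine ⟨_, _, h3, ?_, ?_, k1, k3⟩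
    · exact eventually_atTop.mpr ⟨n, k2⟩
    · exact eventually_atTop.mpr ⟨n, k4⟩
  set S : ℕ → Γb → Set (Boundary X o × Boundary Xs os) := fun n x =>
    if h : (E n x).Nonempty then
      qball (qB o) (bnd h.some).1 (Real.exp (-((l - τ) * n - 3 * δ - 1))) ×ˢ
        qball (qB os) (bnd h.some).2 (Real.exp (-((ls - τ) * n - 3 * δs - 1)))
    else ∅ with hS
  have hSm : ∀ n x, MeasurableSet (S n x) := by
    intro n x
    by_cases h : (E n x).Nonempty
    · simp only [hS, dif_pos h]
      exact (qball_measurable _ _).prod (qball_measurable _ _)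
    · simp only [hS, dif_neg h]
      exact MeasurableSet.empty
  have hES : ∀ n ≥ N, ∀ x, ∀ ω ∈ E n x, bnd ω ∈ S n x := by
    intro n hn x ω hω
    have h : (E n x).Nonempty := ⟨ω, hω⟩
    simp only [hS, dif_pos h]
    obtain ⟨u, us, e, t1, t2, -, -⟩ := key n hn x ω hω
    obtain ⟨u', us', e', t1', t2', -, -⟩ := key n hn x _ h.some_mem
    rw [e, e']
    exact ⟨trk_qB hδ hδ0 t1' t1, trk_qB hδs hδs0 t2' t2⟩
  set K : ℕ → ℝ≥0∞ := fun n => ENNReal.ofReal (Real.exp (c * n)) * ENNReal.ofReal (Real.exp (-((hπ - τ) * n))) with hK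
  have hKb : ∀ n ≥ N, ∀ x, ∀ T, MeasurableSet T → P (E n x ∩ bnd ⁻¹' (Prod.snd ⁻¹' T)) ≤ K n * νs T := by
    intro n hn x T hT
    by_cases h : (E n x).Nonempty
    · have h1 := QQ_bound hp hP (a := fun g => bAct os (ρ2 g)) (fun g => hbm _) hbmeas heq n x (E n x) (hEm n x)
        (fun ω hω => hω.2) (ENNReal.ofReal (Real.exp (c * n))) (by simp [Real.exp_pos]) (by simp)
        (fun ω hω => ((hW ω hω.1).2 n hn).2.2) T hT
      rw [← hνs] at h1
      refine h1.trans ?_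
      rw [hK]
      simp only
      gcongr
      obtain ⟨ω, hω⟩ := h
      have hx : walk ω n = x := hω.2
      have q1 := (hW ω hω.1).1.2 n
      have q2 := ((hW ω hω.1).2 n hn).2.1
      rw [hx] at q1 q2
      have q3 := piN_ne_top hp hP n x
      rw [← ENNReal.ofReal_toReal q3]
      apply ENNReal.ofReal_le_ofReal
      rw [← Real.log_le_iff_le_exp (ENNReal.toReal_pos q1 q3)]
      linarith
    · rw [not_nonempty_iff_eq_empty.mp h]; simp
  set C : ℝ := 12 * δ + 12 * δs + 2 with hC
  have hC0 : 0 < C := by rw [hC]; positivity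
  set r : ℕ → ℝ := fun n => 4 * τ * n + C + 1 with hr
  set M : ℕ → ℝ≥0∞ := fun n => ENNReal.ofReal (c0 * Real.exp (c0 * r n)) with hM
  have hMb : ∀ n ≥ N, ∀ (ξ : Boundary X o) (η : Boundary Xs os),
      {x | (S n x ∩ (qball (qB o) ξ (Real.exp (-(l * n))) ×ˢ (Set.univ : Set (Boundary Xs os))) ∩
        Prod.snd ⁻¹' {η}).Nonempty}.Finite ∧
      ({x | (S n x ∩ (qball (qB o) ξ (Real.exp (-(l * n))) ×ˢ (Set.univ : Set (Boundary Xs os))) ∩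
        Prod.snd ⁻¹' {η}).Nonempty}.ncard : ℝ≥0∞) ≤ M n := by
    intro n hn ξ η
    set J := {x | (S n x ∩ (qball (qB o) ξ (Real.exp (-(l * n))) ×ˢ (Set.univ : Set (Boundary Xs os))) ∩
        Prod.snd ⁻¹' {η}).Nonempty} with hJ
    rcases J.eq_empty_or_nonempty with hJe | ⟨x, hx⟩
    · rw [hJe]; simp
    have hrpos : 0 < r n := by rw [hr]; positivity
    obtain ⟨hfin, hcard⟩ := hgr (r n) hrpos
    have hdata : ∀ y ∈ J, ∃ (u : DivSeq X o) (us : DivSeq Xs os) (w : Boundary X o),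
        Trk o u.1 (ρ1 y o) ((l - τ) * n) ∧ Trk os us.1 (ρ2 y os) ((ls - τ) * n) ∧
        dist o (ρ1 y o) ≤ (l + τ) * n ∧ dist os (ρ2 y os) ≤ (ls + τ) * n ∧
        qB o (mkB o u) w < Real.exp (-((l - τ) * n - 3 * δ - 1)) ∧ qB o ξ w < Real.exp (-(l * n)) ∧
        qB os (mkB os us) η < Real.exp (-((ls - τ) * n - 3 * δs - 1)) := by
      rintro y ⟨⟨w, η'⟩, ⟨hw1, hw2⟩, hw3⟩
      have hw3 : η' = η := hw3
      by_cases h : (E n y).Nonempty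
      · simp only [hS, dif_pos h] at hw1
        obtain ⟨u, us, e, t1, t2, t3, t4⟩ := key n hn y _ h.some_mem
        rw [e] at hw1
        rw [← hw3]
        exact ⟨u, us, w, t1, t2, t3, t4, hw1.1, hw2.1, hw1.2⟩
      · simp only [hS, dif_neg h] at hw1
        exact hw1.elim
    have hsub : J ⊆ (fun γ => x * γ) '' {γ : Γb | disp o os γ < r n} := by
      intro y hy
      refine ⟨x⁻¹ * y, ?_, by simp⟩
      obtain ⟨u, us, w, t1, t2, t3, t4, t5, t6, t7⟩ := hdata x hx
      obtain ⟨u', us', w', t1', t2', t3', t4', t5', t6', t7'⟩ := hdata y hy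
      obtain ⟨wr, rfl⟩ := Quot.exists_rep w
      obtain ⟨wr', rfl⟩ := Quot.exists_rep w'
      obtain ⟨ξr, rfl⟩ := Quot.exists_rep ξ
      obtain ⟨ηr, rfl⟩ := Quot.exists_rep η
      have hτn : 0 ≤ τ * n := by positivity
      have d1 := geo_one hδ hδ0 t1 t1' (w := wr) (w' := wr') (v := ξr) (s := l * n) t5 t5' t6 t6'
        (by nlinarith) t3 t3'
      have d2 := geo_one hδs hδs0 t2 t2' (w := ηr) (w' := ηr) (v := ηr) (s := ls * n) t7 t7'
        (qB_self_lt _ _) (qB_self_lt _ _) (by nlinarith) t4 t4'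
      show disp o os (x⁻¹ * y) < r n
      rw [hdispmax, rho_dist, rho_dist, max_lt_iff, hr, hC]
      constructor <;> nlinarith
    have hfin' := hfin.image (fun γ => x * γ)
    refine ⟨hfin'.subset hsub, ?_⟩
    have hc1 : J.ncard ≤ {γ : Γb | disp o os γ < r n}.ncard :=
      (Set.ncard_le_ncard hsub hfin').trans (Set.ncard_image_le hfin)
    rw [hM]
    simp only
    rw [← ENNReal.ofReal_natCast]
    apply ENNReal.ofReal_le_ofReal
    refine le_trans ?_ hcard
    exact_mod_cast hc1
  obtain ⟨D, F, hD1, hD2, hF1, hF2, hF3, hfinal⟩ := abstract_main (ι := Boundary X o) P bnd hbndm hνb measurable_snd hdis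
    bnd_singleton W hWm ε hε (h2κ.trans (min_le_left _ _)) (h2κ.trans (min_le_right _ _)) N E hEm
    (by
      intro n _
      ext ω
      simp [hE])
    (by
      intro n x y hxy
      refine Set.disjoint_left.mpr ?_
      rintro ω ⟨-, h1⟩ ⟨-, h2⟩
      exact hxy (h1.symm.trans h2))
    S hSm hES K hKb
    (fun n ξ => qball (qB o) ξ (Real.exp (-(l * n))) ×ˢ (Set.univ : Set (Boundary Xs os))) M hMb
  refine ⟨N, D, F, 2 * (c0 * Real.exp (c0 * (C + 1))), hD1, hD2, hF1, hF2, hF3, ?_⟩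
  filter_upwards [hfinal] with η hη _ ξ n hn
  refine (hη ξ n hn).trans (le_of_eq ?_)
  rw [hM, hK]
  simp only
  rw [← ENNReal.ofReal_mul (Real.exp_pos _).le, ← ENNReal.ofReal_mul (by positivity)]
  have h2 : (2 : ℝ≥0∞) = ENNReal.ofReal 2 := by simp
  rw [h2, ← ENNReal.ofReal_mul (by norm_num)]
  congr 1
  have : c0 * r n + (c * n + -((hπ - τ) * n)) = c0 * (C + 1) + -(n * (hπ - hst - ε)) := by
    rw [hr, hc, ← hτε]; ring
  calc 2 * (c0 * Real.exp (c0 * r n) * (Real.exp (c * n) * Real.exp (-((hπ - τ) * n))))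
      = 2 * c0 * Real.exp (c0 * r n + (c * n + -((hπ - τ) * n))) := by
        rw [Real.exp_add, Real.exp_add]; ring
    _ = _ := by rw [this, Real.exp_add]; ring

end HMDim
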